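/- Let n=(n₁,n₂,n₃)∈ℤ³ with all nᵢ≥1, let f, f' ∈ V_n, and let △, △' be triangles of G whose closures intersect in an edge of type i for some i∈{1,2,3}; set M = △̂ ∪ △̂' and d(n) = (n₂+n₃−2, n₁+n₃−2, n₁+n₂−2). Then the following are equivalent: (i) the piecewise function equal to f on △ and to f' on △' belongs to S^{d(n)}(M, V_n); (ii) λ_△^β(f) = λ_{△'}^β(f') for every translate β ∈ B_n(△̂) ∩ B_n(△̂'). -/

import Mathlib

/- ## The three-directional (type-I) grid -/

noncomputable section

open MvPolynomial Set Function

/-- Points of the plane. -/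
abbrev Pt := ℝ × ℝ

/-- Bivariate real polynomials `ℝ[x,y]`. -/
abbrev BPoly := MvPolynomial (Fin 2) ℝ

/-- Evaluation of a bivariate polynomial at a point of the plane. -/
def evalP (q : BPoly) (p : Pt) : ℝ := MvPolynomial.eval ![p.1, p.2] q

/-- Triangles of the three-directional grid `G`:  `⟨v, false⟩` is the "lower"
triangle with vertices `v, v+(1,0), v+(1,1)`, and `⟨v, true⟩` is the "upper"
triangle with vertices `v, v+(0,1), v+(1,1)`. -/
structure Tri where
  v : ℤ × ℤ
  up : Bool
deriving DecidableEq

namespace Tri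

/-- The open triangle in the plane realizing a combinatorial triangle. -/
def toSet (T : Tri) : Set Pt :=
  if T.up then
    {p | (T.v.1 : ℝ) < p.1 ∧ p.1 - (T.v.1 : ℝ) < p.2 - (T.v.2 : ℝ) ∧ p.2 < (T.v.2 : ℝ) + 1}
  else
    {p | (T.v.2 : ℝ) < p.2 ∧ p.2 - (T.v.2 : ℝ) < p.1 - (T.v.1 : ℝ) ∧ p.1 < (T.v.1 : ℝ) + 1}

/-- The closed triangle. -/
def cl (T : Tri) : Set Pt := closure T.toSet

/-- The three lattice vertices of a triangle. -/
def vertices (T : Tri) : Finset (ℤ × ℤ) :=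
  if T.up then {T.v, (T.v.1, T.v.2 + 1), (T.v.1 + 1, T.v.2 + 1)}
  else {T.v, (T.v.1 + 1, T.v.2), (T.v.1 + 1, T.v.2 + 1)}

end Tri

/-- Edges of the grid: a lattice point together with a direction type
(`0 ↦ e₁ = (1,0)`, `1 ↦ e₂ = (0,1)`, `2 ↦ e₃ = (1,1)`); the edge of type `i`
at `v` joins `v` to `v + eᵢ`. -/
abbrev Edge := (ℤ × ℤ) × Fin 3

/-- The three direction vectors `e₁, e₂, e₃`. -/
def dirZ : Fin 3 → ℤ × ℤ := ![(1, 0), (0, 1), (1, 1)]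

/-- The three edges of a triangle. -/
def Tri.edges (T : Tri) : Finset Edge :=
  if T.up then {((T.v.1, T.v.2 + 1), 0), (T.v, 1), (T.v, 2)}
  else {(T.v, 0), ((T.v.1 + 1, T.v.2), 1), (T.v, 2)}

/-- The open segment realizing an edge. -/
def Edge.seg (ε : Edge) : Set Pt :=
  {p | ∃ t : ℝ, 0 < t ∧ t < 1 ∧
    p = ((ε.1.1 : ℝ) + t * ((dirZ ε.2).1 : ℝ), (ε.1.2 : ℝ) + t * ((dirZ ε.2).2 : ℝ))}

/-- `M*`: the union of the closed triangles of a multicell domain. -/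
def Mstar (M : Finset Tri) : Set Pt := ⋃ T ∈ M, T.cl

/-- `ℙ(M,V)`: continuous functions on `M*` whose restriction to each triangle
of `M` is the restriction of a polynomial in `V`. -/
def PP (M : Finset Tri) (V : Set BPoly) : Set (Pt → ℝ) :=
  {f | ContinuousOn f (Mstar M) ∧ ∀ T ∈ M, ∃ q ∈ V, EqOn f (evalP q) T.toSet}

/-- The diamond of an edge: union of the closed triangles of `M` having `ε`
as an edge. -/
def diamond (M : Finset Tri) (ε : Edge) : Set Pt :=
  ⋃ T ∈ M.filter (fun T => ε ∈ T.edges), T.cl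

/-- The spline space with edge smoothness `d` on the multicell domain `M`:
piecewise polynomials (pieces from `V`) which are `C^{dᵢ}` on the diamond of
every edge of type `i` of `M`. -/
def SplineSpace (M : Finset Tri) (V : Set BPoly) (d : Fin 3 → ℕ) : Set (Pt → ℝ) :=
  {f | f ∈ PP M V ∧
    ∀ ε : Edge, (∃ T ∈ M, ε ∈ T.edges) → ContDiffOn ℝ (d ε.2) f (diamond M ε)}

/-- Directional derivative of a polynomial along an integer vector. -/
def dirD (e : ℤ × ℤ) (q : BPoly) : BPoly :=
  (e.1 : ℝ) • MvPolynomial.pderiv (0 : Fin 2) q + (e.2 : ℝ) • MvPolynomial.pderiv (1 : Fin 2) q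

/-- The mixed directional derivative operator
`D_s = (∂_{e₁})^{s₁} (∂_{e₂})^{s₂} (∂_{e₃})^{s₃}`. -/
def Dmix (s : Fin 3 → ℕ) (q : BPoly) : BPoly :=
  (dirD (dirZ 0))^[s 0] ((dirD (dirZ 1))^[s 1] ((dirD (dirZ 2))^[s 2] q))

/-- The index sets `Iᵢ^d`; `I₁^d = {s | s₂+s₃ ≤ d₁}` and cyclically. -/
def Iset (d : Fin 3 → ℕ) (i : Fin 3) : Set (Fin 3 → ℕ) :=
  {s | s (i + 1) + s (i + 2) ≤ d i}

/-- Two triangles of the grid are adjacent if they are distinct and share an edge. -/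
def Adj (T T' : Tri) : Prop := T ≠ T' ∧ ∃ ε : Edge, ε ∈ T.edges ∧ ε ∈ T'.edges

/-- `c` is an edge-connected chain of length `m` from `T` to `T'`. -/
def TriIsChain (T T' : Tri) (m : ℕ) (c : ℕ → Tri) : Prop :=
  c 0 = T ∧ c m = T' ∧ ∀ k < m, Adj (c k) (c (k + 1))

/-- The set of types of the edges crossed by a chain. -/
def chainTypes (m : ℕ) (c : ℕ → Tri) : Set (Fin 3) :=
  {i | ∃ k < m, ∃ ε : Edge, ε.2 = i ∧ ε ∈ (c k).edges ∧ ε ∈ (c (k + 1)).edges}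

/-- Minimal length of an edge-connected chain between two triangles. -/
def minLen (T T' : Tri) : ℕ := sInf {m | ∃ c, TriIsChain T T' m c}

/-- The smoothness type `SmType(△,△')`: the types of the edges crossed by a
shortest edge-connected chain from `△` to `△'`. -/
def SmType (T T' : Tri) : Set (Fin 3) :=
  {i | ∃ c, TriIsChain T T' (minLen T T') c ∧ i ∈ chainTypes (minLen T T') c}

/-- `q` is the polynomial piece of `f` on the triangle `T`. -/
def IsPiece (f : Pt → ℝ) (T : Tri) (q : BPoly) : Prop := EqOn f (evalP q) T.toSet

/-- The strongly regular spline space `Ŝ^d(M,V)`: piecewise polynomials such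
that for any two triangles of `M` with intersecting closures, the derivatives
`D_s`, `s ∈ ⋂_{i ∈ SmType(△,△')} Iᵢ^d`, of the two polynomial pieces agree on the
intersection of the closures (i.e. `D_s f` is continuous there). -/
def StrongSpline (M : Finset Tri) (V : Set BPoly) (d : Fin 3 → ℕ) : Set (Pt → ℝ) :=
  {f | f ∈ PP M V ∧
    ∀ T ∈ M, ∀ T' ∈ M, (T.cl ∩ T'.cl).Nonempty →
      ∀ s : Fin 3 → ℕ, (∀ i ∈ SmType T T', s ∈ Iset d i) →
        ∀ q q' : BPoly, IsPiece f T q → IsPiece f T' q' →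
          ∀ x ∈ T.cl ∩ T'.cl, evalP (Dmix s q) x = evalP (Dmix s q') x}

/-- Kissing triangles: the closures intersect in exactly one point. -/
def Kissing (T T' : Tri) : Prop := ∃ p : Pt, T.cl ∩ T'.cl = {p}

/-- An over-concave vertex of `M`: exactly one triangle of `star(ν)` is
missing from `M`. -/
def OverConcave (M : Finset Tri) (ν : ℤ × ℤ) : Prop :=
  ∃! T : Tri, ν ∈ T.vertices ∧ T ∉ M

/- ## Type-I box splines -/

/-- The Courant hat function `B_{(1,1,1)}`: the piecewise linear function on
`G` supported on `star((1,1))` with value `1` at `(1,1)` and `0` at all other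
lattice points. -/
def hat (p : Pt) : ℝ :=
  max 0 (min (min (min p.1 p.2) (min (2 - p.1) (2 - p.2)))
             (min (1 - (p.1 - p.2)) (1 + (p.1 - p.2))))

/-- The type-I box spline `B_{(n₁,n₂,n₃)}`, defined by repeated directional
convolution starting from the Courant hat function (the result is independent
of the order of the convolutions); junk value `0` if some `nᵢ = 0`. -/
noncomputable def boxN : ℕ → ℕ → ℕ → Pt → ℝ
  | 0, _, _, _ => 0
  | _ + 1, 0, _, _ => 0
  | _ + 1, _ + 1, 0, _ => 0
  | 1, 1, 1, p => hat p
  | a + 2, b + 1, c + 1, p =>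
      ∫ t in (0:ℝ)..1, boxN (a + 1) (b + 1) (c + 1) (p.1 - t, p.2)
  | 1, b + 2, c + 1, p =>
      ∫ t in (0:ℝ)..1, boxN 1 (b + 1) (c + 1) (p.1, p.2 - t)
  | 1, 1, c + 2, p =>
      ∫ t in (0:ℝ)..1, boxN 1 1 (c + 1) (p.1 - t, p.2 - t)
  termination_by a b c _ => a + b + c
  decreasing_by all_goals omega

/-- The translate `B_n(· - w)` of the box spline. -/
def trBox (n₁ n₂ n₃ : ℕ) (w : ℤ × ℤ) (p : Pt) : ℝ :=
  boxN n₁ n₂ n₃ (p.1 - (w.1 : ℝ), p.2 - (w.2 : ℝ))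

/-- `Supp_n(△̂)`: lattice translates of `B_n` that do not vanish identically
on the triangle `T`. -/
def activeSet (n₁ n₂ n₃ : ℕ) (T : Tri) : Set (ℤ × ℤ) :=
  {w | ¬ ∀ p ∈ T.toSet, trBox n₁ n₂ n₃ w p = 0}

/-- `c` is the coefficient vector of the polynomial `q` with respect to the
active box-spline translates on `T`:  `q|_T = Σ_β λ_T^β(q)·β|_T`. -/
def Represents (n₁ n₂ n₃ : ℕ) (T : Tri) (q : BPoly) (c : (ℤ × ℤ) →₀ ℝ) : Prop :=
  ↑c.support ⊆ activeSet n₁ n₂ n₃ T ∧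
    ∀ p ∈ T.toSet, evalP q p = c.sum fun w a => a * trBox n₁ n₂ n₃ w p

/-- `V_n` (relative to the triangle `T`): polynomials whose restriction to `T`
is a linear combination of the active box-spline translates on `T`. -/
def VSpace (n₁ n₂ n₃ : ℕ) (T : Tri) : Set BPoly :=
  {q | ∃ c, Represents n₁ n₂ n₃ T q c}

/- ### Part 1: polynomial basics -/

section simpEval
variable (q r : BPoly) (p : Pt)
@[simp] lemma evalP_add : evalP (q + r) p = evalP q p + evalP r p := by simp [evalP]
@[simp] lemma evalP_sub : evalP (q - r) p = evalP q p - evalP r p := by simp [evalP]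
@[simp] lemma evalP_mul : evalP (q * r) p = evalP q p * evalP r p := by simp [evalP]
@[simp] lemma evalP_neg : evalP (-q) p = - evalP q p := by simp [evalP]
@[simp] lemma evalP_zero : evalP 0 p = 0 := by simp [evalP]
@[simp] lemma evalP_one : evalP 1 p = 1 := by simp [evalP]
@[simp] lemma evalP_C (a : ℝ) : evalP (C a) p = a := by simp [evalP]
@[simp] lemma evalP_X0 : evalP (X 0) p = p.1 := by simp [evalP]
@[simp] lemma evalP_X1 : evalP (X 1) p = p.2 := by simp [evalP]
@[simp] lemma evalP_pow (n : ℕ) : evalP (q ^ n) p = evalP q p ^ n := by simp [evalP]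
@[simp] lemma evalP_smul (a : ℝ) : evalP (a • q) p = a * evalP q p := by simp [evalP, smul_eval]
@[simp] lemma evalP_intCast (a : ℤ) : evalP (a : BPoly) p = a := by simp [evalP]
lemma evalP_sum {ι : Type*} (s : Finset ι) (g : ι → BPoly) :
    evalP (∑ i ∈ s, g i) p = ∑ i ∈ s, evalP (g i) p := by simp [evalP]
end simpEval

lemma evalP_ext {q r : BPoly} (h : ∀ p, evalP q p = evalP r p) : q = r := by
  apply MvPolynomial.funext
  intro x
  have := h (x 0, x 1)
  have e : ![x 0, x 1] = x := by ext i; fin_cases i <;> rfl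
  simpa [evalP, e] using this

lemma evalP_ext_box {q r : BPoly} {a b c d : ℝ} (hab : a < b) (hcd : c < d)
    (h : ∀ x y, a < x → x < b → c < y → y < d → evalP q (x, y) = evalP r (x, y)) : q = r := by
  apply MvPolynomial.funext_set (![Ioo a b, Ioo c d])
  · intro i; fin_cases i
    · exact Ioo_infinite hab
    · exact Ioo_infinite hcd
  · intro x hx
    have h0 := hx 0 (mem_univ _)
    have h1 := hx 1 (mem_univ _)
    simp at h0 h1
    have := h (x 0) (x 1) h0.1 h0.2 h1.1 h1.2
    have e : ![x 0, x 1] = x := by ext i; fin_cases i <;> rfl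
    simpa [evalP, e] using this

/-- directional derivations -/
def DV (s : Fin 3) : Derivation ℝ BPoly BPoly :=
  ((dirZ s).1 : ℝ) • pderiv 0 + ((dirZ s).2 : ℝ) • pderiv 1

lemma DV_apply (s : Fin 3) (q : BPoly) :
    DV s q = ((dirZ s).1 : ℝ) • pderiv 0 q + ((dirZ s).2 : ℝ) • pderiv 1 q := rfl

lemma DV0 (q : BPoly) : DV 0 q = pderiv 0 q := by simp [DV_apply, dirZ]
lemma DV1 (q : BPoly) : DV 1 q = pderiv 1 q := by simp [DV_apply, dirZ]
lemma DV2 (q : BPoly) : DV 2 q = pderiv 0 q + pderiv 1 q := by simp [DV_apply, dirZ]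

@[simp] lemma DV_C (s : Fin 3) (a : ℝ) : DV s (C a) = 0 := by simp
@[simp] lemma DV_one (s : Fin 3) : DV s 1 = 0 := by simp
@[simp] lemma DV_X0 (s : Fin 3) : DV s (X 0) = C ((dirZ s).1 : ℝ) := by
  rw [DV_apply, pderiv_X_self, pderiv_X_of_ne (by decide)]
  simp [MvPolynomial.smul_eq_C_mul]
@[simp] lemma DV_X1 (s : Fin 3) : DV s (X 1) = C ((dirZ s).2 : ℝ) := by
  rw [DV_apply, pderiv_X_self, pderiv_X_of_ne (by decide)]
  simp [MvPolynomial.smul_eq_C_mul]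
@[simp] lemma DV_mul (s : Fin 3) (q r : BPoly) : DV s (q * r) = q * DV s r + r * DV s q := by
  rw [Derivation.leibniz]; simp

lemma pderiv_comm' (i j : Fin 2) (q : BPoly) : pderiv i (pderiv j q) = pderiv j (pderiv i q) := by
  have : ⁅(pderiv i : Derivation ℝ BPoly BPoly), (pderiv j : Derivation ℝ BPoly BPoly)⁆ = 0 := by
    apply MvPolynomial.derivation_ext
    intro k
    rw [Derivation.commutator_apply]
    simp [pderiv_X, Pi.single_apply]
    split_ifs <;> simp
  have h := congrArg (fun D => D q) this
  simp only [Derivation.commutator_apply, Derivation.coe_zero, Pi.zero_apply] at h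
  exact sub_eq_zero.mp h

lemma DV_comm (s t : Fin 3) (q : BPoly) : DV s (DV t q) = DV t (DV s q) := by
  have h := pderiv_comm' 0 1 q
  simp only [DV_apply, map_add, Derivation.map_smul, h]
  module

lemma hasDerivAt_line (q : BPoly) (s : Fin 3) (p : Pt) (t : ℝ) :
    HasDerivAt (fun t : ℝ => evalP q (p.1 + t * ((dirZ s).1 : ℝ), p.2 + t * ((dirZ s).2 : ℝ)))
      (evalP (DV s q) (p.1 + t * ((dirZ s).1 : ℝ), p.2 + t * ((dirZ s).2 : ℝ))) t := by
  induction q using MvPolynomial.induction_on with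
  | C a => simpa using hasDerivAt_const t a
  | add p q hp hq => simp only [evalP_add, map_add]; exact hp.fun_add hq
  | mul_X q i hq =>
    have hX : HasDerivAt (fun t : ℝ =>
        evalP (X i) (p.1 + t * ((dirZ s).1 : ℝ), p.2 + t * ((dirZ s).2 : ℝ)))
      (evalP (DV s (X i)) (p.1 + t * ((dirZ s).1 : ℝ), p.2 + t * ((dirZ s).2 : ℝ))) t := by
      fin_cases i
      · simpa using ((hasDerivAt_id t).mul_const ((dirZ s).1 : ℝ)).const_add p.1
      · simpa using ((hasDerivAt_id t).mul_const ((dirZ s).2 : ℝ)).const_add p.2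
    simp only [evalP_mul, DV_mul, evalP_add]
    refine (hq.fun_mul hX).congr_deriv ?_
    ring

lemma contDiff_evalP (q : BPoly) {n : WithTop ℕ∞} : ContDiff ℝ n (evalP q) := by
  induction q using MvPolynomial.induction_on with
  | C a =>
    have : evalP (C a) = fun _ => a := _root_.funext (fun p => evalP_C p a)
    rw [this]; exact contDiff_const
  | add p q hp hq =>
    rw [_root_.funext (fun x => evalP_add p q x)]; exact hp.add hq
  | mul_X q i hq =>
    rw [_root_.funext (fun x => evalP_mul q (X i) x)]
    refine hq.mul ?_
    fin_cases i
    · have : evalP (X 0) = fun p => p.1 := _root_.funext (fun p => evalP_X0 p)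
      simp only [Fin.zero_eta, this]; exact contDiff_fst
    · have : evalP (X 1) = fun p => p.2 := _root_.funext (fun p => evalP_X1 p)
      simp only [Fin.mk_one, this]; exact contDiff_snd

lemma continuous_evalP (q : BPoly) : Continuous (evalP q) :=
  (contDiff_evalP q (n := 0)).continuous

/-- direction as a real vector -/
def er (s : Fin 3) : Pt := (((dirZ s).1 : ℝ), ((dirZ s).2 : ℝ))

lemma fderiv_evalP (q : BPoly) (s : Fin 3) (p : Pt) :
    fderiv ℝ (evalP q) p (er s) = evalP (DV s q) p := by
  have h1 : HasFDerivAt (evalP q) (fderiv ℝ (evalP q) p) p :=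
    ((contDiff_evalP q (n := 1)).differentiable (by simp) p).hasFDerivAt
  have h2 := hasDerivAt_line q s p 0
  have h3 : HasDerivAt (fun t : ℝ => (p.1 + t * ((dirZ s).1 : ℝ), p.2 + t * ((dirZ s).2 : ℝ)))
      (er s) 0 := by
    have a1 : HasDerivAt (fun t : ℝ => p.1 + t * ((dirZ s).1 : ℝ)) ((dirZ s).1 : ℝ) 0 := by
      simpa using ((hasDerivAt_id (0:ℝ)).mul_const ((dirZ s).1 : ℝ)).const_add p.1
    have a2 : HasDerivAt (fun t : ℝ => p.2 + t * ((dirZ s).2 : ℝ)) ((dirZ s).2 : ℝ) 0 := by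
      simpa using ((hasDerivAt_id (0:ℝ)).mul_const ((dirZ s).2 : ℝ)).const_add p.2
    exact a1.prodMk a2
  have h4 := HasFDerivAt.comp_hasDerivAt (x := (0:ℝ)) (l := evalP q) (l' := fderiv ℝ (evalP q) p) (by simpa using h1) h3
  have := h2.unique h4
  simpa using this.symm

lemma DV_surj (s : Fin 3) : Function.Surjective (DV s) := by
  have key : ∀ (j i : ℕ) (a : ℝ), ∃ A, DV s A = C a * X 0 ^ i * X 1 ^ j := by
    have hX0 : ∀ i : ℕ, DV s (X 0 ^ (i + 1) : BPoly)
        = C (((i : ℝ) + 1) * ((dirZ s).1 : ℝ)) * X 0 ^ i := by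
      intro i; rw [Derivation.leibniz_pow]; simp; ring
    have hX1 : ∀ i : ℕ, DV s (X 1 ^ (i + 1) : BPoly)
        = C (((i : ℝ) + 1) * ((dirZ s).2 : ℝ)) * X 1 ^ i := by
      intro i; rw [Derivation.leibniz_pow]; simp; ring
    have hn : ∀ i : ℕ, ((i : ℝ) + 1) ≠ 0 := fun i => by positivity
    by_cases hs : s = 1
    · subst hs
      intro j i a
      refine ⟨C (a / (j + 1)) * X 0 ^ i * X 1 ^ (j + 1), ?_⟩
      have h0 : DV 1 (X 0 ^ i : BPoly) = 0 := by
        rw [Derivation.leibniz_pow]; simp [dirZ]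
      rw [DV_mul, DV_mul, hX1, h0]
      have : (C a : BPoly) = C (a / (j + 1)) * C ((j:ℝ) + 1) := by
        rw [← C_mul, div_mul_cancel₀ _ (hn j)]
      rw [this]; simp [dirZ]; ring
    · have h1 : (((dirZ s).1 : ℤ) : ℝ) = 1 := by fin_cases s <;> simp_all [dirZ]
      intro j
      induction j with
      | zero =>
        intro i a
        refine ⟨C (a / (i + 1)) * X 0 ^ (i + 1), ?_⟩
        rw [DV_mul, hX0, h1]
        have : (C a : BPoly) = C (a / (i + 1)) * C ((i:ℝ) + 1) := by
          rw [← C_mul, div_mul_cancel₀ _ (hn i)]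
        rw [this]; simp; ring
      | succ j ih =>
        intro i a
        obtain ⟨A, hA⟩ := ih (i + 1) (- (a / (i + 1) * (((j : ℝ) + 1) * ((dirZ s).2 : ℝ))))
        refine ⟨C (a / (i + 1)) * X 0 ^ (i + 1) * X 1 ^ (j + 1) + A, ?_⟩
        rw [map_add, hA, DV_mul, DV_mul, hX0, hX1, h1]
        have : (C a : BPoly) = C (a / (i + 1)) * C ((i:ℝ) + 1) := by
          rw [← C_mul, div_mul_cancel₀ _ (hn i)]
        rw [this]; simp; ring
  intro q
  induction q using MvPolynomial.induction_on' with
  | monomial u a =>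
    obtain ⟨A, hA⟩ := key (u 1) (u 0) a
    refine ⟨A, hA.trans ?_⟩
    rw [monomial_eq, Finsupp.prod_fintype _ _ (by simp)]
    simp [Fin.prod_univ_two, mul_assoc]
  | add p q hp hq =>
    obtain ⟨A, hA⟩ := hp
    obtain ⟨B, hB⟩ := hq
    exact ⟨A + B, by rw [map_add, hA, hB]⟩

lemma exists_anti (s : Fin 3) : ∃ g : BPoly →ₗ[ℝ] BPoly,
    (DV s : BPoly →ₗ[ℝ] BPoly) ∘ₗ g = LinearMap.id :=
  LinearMap.exists_rightInverse_of_surjective _ (LinearMap.range_eq_top.mpr (DV_surj s))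

/-- a linear antiderivative operator -/
def anti (s : Fin 3) : BPoly →ₗ[ℝ] BPoly := (exists_anti s).choose

@[simp] lemma DV_anti (s : Fin 3) (q : BPoly) : DV s (anti s q) = q := by
  have := congrArg (fun g => g q) (exists_anti s).choose_spec
  exact this

/-- substitution -/
def sb (s : Fin 3) (α : BPoly) (v : ℤ × ℤ) : BPoly →ₐ[ℝ] BPoly :=
  aeval ![X 0 - C ((dirZ s).1 : ℝ) * α + C (v.1 : ℝ), X 1 - C ((dirZ s).2 : ℝ) * α + C (v.2 : ℝ)]

lemma evalP_aeval (a b q : BPoly) (p : Pt) :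
    evalP (aeval ![a, b] q) p = evalP q (evalP a p, evalP b p) := by
  induction q using MvPolynomial.induction_on with
  | C a => simp
  | add p q hp hq => rw [map_add, evalP_add, evalP_add, hp, hq]
  | mul_X q i hq => rw [map_mul, evalP_mul, evalP_mul, hq]; fin_cases i <;> simp

@[simp] lemma evalP_sb (s : Fin 3) (α : BPoly) (v : ℤ × ℤ) (q : BPoly) (p : Pt) :
    evalP (sb s α v q) p = evalP q (p.1 - (dirZ s).1 * evalP α p + v.1,
      p.2 - (dirZ s).2 * evalP α p + v.2) := by
  rw [sb, evalP_aeval]; simp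

lemma DV_aeval (t : Fin 3) (a b q : BPoly) :
    DV t (aeval ![a, b] q) = aeval ![a, b] (pderiv 0 q) * DV t a
      + aeval ![a, b] (pderiv 1 q) * DV t b := by
  induction q using MvPolynomial.induction_on with
  | C a => simp
  | add p q hp hq => simp only [map_add, hp, hq]; ring
  | mul_X q i hq =>
    rw [map_mul, DV_mul, hq]
    fin_cases i
    · simp [pderiv_X_of_ne (R := ℝ) (show (0 : Fin 2) ≠ 1 by decide)]; ring
    · simp [pderiv_X_of_ne (R := ℝ) (show (1 : Fin 2) ≠ 0 by decide)]; ring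

lemma DV_sb (t s : Fin 3) (α : BPoly) (v : ℤ × ℤ) (q : BPoly) :
    DV t (sb s α v q) = sb s α v (DV t q) - DV t α * sb s α v (DV s q) := by
  rw [sb, DV_aeval]
  simp only [map_add, map_sub, DV_mul, DV_C, DV_X0, DV_X1, DV_apply s q, DV_apply t q,
    smul_eq_C_mul, map_mul, algHom_C, algebraMap_eq]
  ring

/-- if `DV s κ = 0` then `κ` is constant along lines -/
lemma const_line {s : Fin 3} {κ : BPoly} (h : DV s κ = 0) (p : Pt) (t : ℝ) :
    evalP κ (p.1 + t * ((dirZ s).1 : ℝ), p.2 + t * ((dirZ s).2 : ℝ)) = evalP κ p := by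
  have := is_const_of_deriv_eq_zero
    (f := fun t : ℝ => evalP κ (p.1 + t * ((dirZ s).1 : ℝ), p.2 + t * ((dirZ s).2 : ℝ)))
    (fun t => (hasDerivAt_line κ s p t).differentiableAt)
    (fun t => by rw [(hasDerivAt_line κ s p t).deriv, h]; simp) t 0
  simpa using this

lemma const_of_DV {s t : Fin 3} (hst : s ≠ t) {κ : BPoly} (hs : DV s κ = 0) (ht : DV t κ = 0) :
    ∃ a : ℝ, κ = C a := by
  refine ⟨evalP κ (0, 0), evalP_ext ?_⟩
  intro p
  rw [evalP_C]
  have h0 : DV 0 κ = 0 ∧ DV 1 κ = 0 := by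
    simp only [DV_apply] at *
    fin_cases s <;> fin_cases t <;> simp_all [dirZ]
  have a1 := const_line h0.1 (0, 0) p.1
  have a2 := const_line h0.2 (p.1, 0) p.2
  simp [dirZ] at a1 a2
  rw [← a1, ← a2]

/- ### Part 2: the averaging operator on families of pieces -/

/-- families of local polynomial pieces -/
abbrev Fam := ℤ × ℤ → Bool → BPoly

/-- first breakpoint -/
def al (s : Fin 3) (τ : Bool) : BPoly :=
  ![cond τ (X 0) (X 0 - X 1), cond τ (X 1 - X 0) (X 1), cond τ (X 0) (X 1)] s
/-- second breakpoint -/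
def be (s : Fin 3) (τ : Bool) : BPoly :=
  ![cond τ (1 + X 0 - X 1) (X 0), cond τ (X 1) (1 + X 1 - X 0), cond τ (X 1) (X 0)] s
/-- the intermediate cell -/
def aa (s : Fin 3) (τ : Bool) : ℤ × ℤ :=
  ![cond τ (1, 0) 0, cond τ 0 (0, 1), cond τ (1, 0) (0, 1)] s

lemma DV_al (s : Fin 3) (τ : Bool) : DV s (al s τ) = 1 := by
  fin_cases s <;> cases τ <;> simp [al, dirZ]
lemma DV_be (s : Fin 3) (τ : Bool) : DV s (be s τ) = 1 := by
  fin_cases s <;> cases τ <;> simp [be, dirZ]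

/-- the three-segment integral in terms of antiderivatives -/
def RR (s : Fin 3) (τ : Bool) (A0 A1 A2 : BPoly) : BPoly :=
  (A0 - sb s (al s τ) 0 A0) + (sb s (al s τ) (aa s τ) A1 - sb s (be s τ) (aa s τ) A1)
    + (sb s (be s τ) (dirZ s) A2 - A2)

/-- averaging operator -/
def II (s : Fin 3) (p : Fam) : Fam := fun u τ =>
  RR s τ (anti s (p u τ)) (anti s (p (u - aa s τ) (!τ))) (anti s (p (u - dirZ s) τ))

lemma sb_const {s : Fin 3} {κ : BPoly} (h : DV s κ = 0) (α β : BPoly) (v : ℤ × ℤ) :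
    sb s α v κ = sb s β v κ := by
  apply evalP_ext
  intro p
  rw [evalP_sb, evalP_sb]
  have a := const_line h (p.1 + v.1, p.2 + v.2) (- evalP α p)
  have b := const_line h (p.1 + v.1, p.2 + v.2) (- evalP β p)
  simp only at a b
  have e : ∀ z : ℝ, (p.1 - (dirZ s).1 * z + v.1, p.2 - (dirZ s).2 * z + v.2)
      = (p.1 + v.1 + -z * ((dirZ s).1 : ℝ), p.2 + v.2 + -z * ((dirZ s).2 : ℝ)) := by
    intro z; ext <;> simp <;> ring
  rw [e, e, a, b]

lemma sb_zero (s : Fin 3) (κ : BPoly) : sb s 0 0 κ = κ := by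
  apply evalP_ext; intro p; rw [evalP_sb]; simp
lemma sb_one (s : Fin 3) (κ : BPoly) : sb s 1 (dirZ s) κ = κ := by
  apply evalP_ext; intro p; rw [evalP_sb]; simp

lemma RR_zero {s : Fin 3} {τ : Bool} {A0 A1 A2 : BPoly}
    (h0 : DV s A0 = 0) (h1 : DV s A1 = 0) (h2 : DV s A2 = 0) : RR s τ A0 A1 A2 = 0 := by
  rw [RR, sb_const h0 (al s τ) 0, sb_zero, sb_const h1 (al s τ) (be s τ),
    sb_const h2 (be s τ) 1, sb_one]
  ring

lemma RR_sub (s : Fin 3) (τ : Bool) (A0 A1 A2 B0 B1 B2 : BPoly) :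
    RR s τ (A0 - B0) (A1 - B1) (A2 - B2) = RR s τ A0 A1 A2 - RR s τ B0 B1 B2 := by
  simp only [RR, map_sub]; ring

lemma RR_eq_II {s : Fin 3} {τ : Bool} {u : ℤ × ℤ} {p : Fam} {A0 A1 A2 : BPoly}
    (h0 : DV s A0 = p u τ) (h1 : DV s A1 = p (u - aa s τ) (!τ))
    (h2 : DV s A2 = p (u - dirZ s) τ) : II s p u τ = RR s τ A0 A1 A2 := by
  symm
  rw [← sub_eq_zero, II, ← RR_sub]
  apply RR_zero <;> simp [*]

lemma II_sub (s : Fin 3) (p q : Fam) : II s (p - q) = II s p - II s q := by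
  funext u τ
  simp only [II, Pi.sub_apply, map_sub, RR_sub]

lemma II_zero (s : Fin 3) : II s 0 = 0 := by
  funext u τ
  simp only [II, Pi.zero_apply, map_zero]
  exact RR_zero (map_zero _) (map_zero _) (map_zero _)

lemma II_shift (s : Fin 3) (p : Fam) (v u : ℤ × ℤ) (τ : Bool) :
    II s (fun u τ => p (u - v) τ) u τ = II s p (u - v) τ := by
  simp only [II, sub_right_comm]

lemma DV_II (s : Fin 3) (p : Fam) (u : ℤ × ℤ) (τ : Bool) :
    DV s (II s p u τ) = p u τ - p (u - dirZ s) τ := by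
  simp only [II, RR, map_add, map_sub, DV_sb, DV_al, DV_be, DV_anti]
  ring

/-- continuity across edges of type `i` -/
def EC (i : Fin 3) (p : Fam) : Prop :=
  match i with
  | 0 => ∀ u z, evalP (p u false) (z, 0) = evalP (p (u - (0, 1)) true) (z, 1)
  | 1 => ∀ u z, evalP (p u true) (0, z) = evalP (p (u - (1, 0)) false) (1, z)
  | 2 => ∀ u z, evalP (p u false) (z, z) = evalP (p u true) (z, z)

lemma jump1 {s t r : Fin 3} (hst : s ≠ t) (hsr : s ≠ r) (htr : t ≠ r) {p : Fam} (h : EC r p)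
    (u : ℤ × ℤ) (τ : Bool) :
    DV t (al s τ) * (sb s (al s τ) 0 (p u τ) - sb s (al s τ) (aa s τ) (p (u - aa s τ) (!τ))) = 0 := by
  apply evalP_ext
  intro q
  fin_cases s <;> fin_cases t <;> (try exact absurd rfl hst) <;> fin_cases r <;>
    (try exact absurd rfl hsr) <;> (try exact absurd rfl htr) <;> cases τ <;>
    simp [al, aa, dirZ] <;> (try rw [sub_eq_zero])
  all_goals first | exact h _ _ | exact (h _ _).symm

lemma jump2 {s t r : Fin 3} (hst : s ≠ t) (hsr : s ≠ r) (htr : t ≠ r) {p : Fam} (h : EC r p)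
    (u : ℤ × ℤ) (τ : Bool) :
    DV t (be s τ) * (sb s (be s τ) (aa s τ) (p (u - aa s τ) (!τ)) -
      sb s (be s τ) (dirZ s) (p (u - dirZ s) τ)) = 0 := by
  have e1 : u - (1, 1) = u - (1, 0) - (0, 1) := by ext <;> simp <;> ring
  have e2 : u - (1, 1) = u - (0, 1) - (1, 0) := by ext <;> simp <;> ring
  have e3 : ∀ x y : ℝ, x - (1 + x - y) + 1 = y := by intros; ring
  apply evalP_ext
  intro q
  fin_cases s <;> fin_cases t <;> (try exact absurd rfl hst) <;> fin_cases r <;>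
    (try exact absurd rfl hsr) <;> (try exact absurd rfl htr) <;> cases τ <;>
    simp [be, aa, dirZ] <;> (try rw [sub_eq_zero])
  · simp only [e3]; exact (h _ _).symm
  · exact h _ _
  · simp only [e3]; exact h _ _
  · exact h _ _
  · rw [e2]; exact h _ _
  · rw [e1]; exact h _ _

lemma DV_II_comm {s t r : Fin 3} (hst : s ≠ t) (hsr : s ≠ r) (htr : t ≠ r) {p : Fam}
    (h : EC r p) (u : ℤ × ℤ) (τ : Bool) :
    DV t (II s p u τ) = II s (fun u τ => DV t (p u τ)) u τ := by
  have e : II s (fun u τ => DV t (p u τ)) u τ =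
      RR s τ (DV t (anti s (p u τ))) (DV t (anti s (p (u - aa s τ) (!τ))))
        (DV t (anti s (p (u - dirZ s) τ))) := by
    apply RR_eq_II <;> rw [DV_comm, DV_anti]
  have j1 := jump1 hst hsr htr h u τ
  have j2 := jump2 hst hsr htr h u τ
  rw [e]
  simp only [II, RR, map_add, map_sub, DV_sb, DV_anti]
  linear_combination j1 + j2

lemma EC_II_ne {s i : Fin 3} (hsi : s ≠ i) (p : Fam) : EC i (II s p) := by
  have e1 : ∀ u : ℤ × ℤ, u - (1, 1) = u - (1, 0) - (0, 1) := by intro u; ext <;> simp <;> ring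
  have e2 : ∀ u : ℤ × ℤ, u - (0, 1) - (1, 0) = u - (1, 0) - (0, 1) := by
    intro u; ext <;> simp <;> ring
  fin_cases s <;> fin_cases i <;> (try exact absurd rfl hsi) <;> intro u z <;>
    simp [II, RR, al, be, aa, dirZ, e1, e2] <;> (try ring_nf)

lemma const_line_of {s : Fin 3} {κ : BPoly} (p : Pt) (h : ∀ t : ℝ,
    evalP (DV s κ) (p.1 + t * ((dirZ s).1 : ℝ), p.2 + t * ((dirZ s).2 : ℝ)) = 0) (t : ℝ) :
    evalP κ (p.1 + t * ((dirZ s).1 : ℝ), p.2 + t * ((dirZ s).2 : ℝ)) = evalP κ p := by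
  have := is_const_of_deriv_eq_zero
    (f := fun t : ℝ => evalP κ (p.1 + t * ((dirZ s).1 : ℝ), p.2 + t * ((dirZ s).2 : ℝ)))
    (fun t => (hasDerivAt_line κ s p t).differentiableAt)
    (fun t => by rw [(hasDerivAt_line κ s p t).deriv]; exact h t) t 0
  simpa using this

lemma EC_II_self (s : Fin 3) (p : Fam) (h : EC s p) : EC s (II s p) := by
  -- differences of antiderivatives are constant along the edge line
  have key : ∀ (P Q : BPoly) (v : ℤ × ℤ) (z0 : Pt), (∀ t : ℝ,
      evalP P (z0.1 + t * ((dirZ s).1 : ℝ), z0.2 + t * ((dirZ s).2 : ℝ)) =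
      evalP Q (z0.1 + t * ((dirZ s).1 : ℝ) + v.1, z0.2 + t * ((dirZ s).2 : ℝ) + v.2)) → ∀ t : ℝ,
      evalP (anti s P) (z0.1 + t * ((dirZ s).1 : ℝ), z0.2 + t * ((dirZ s).2 : ℝ)) -
      evalP (anti s Q) (z0.1 + t * ((dirZ s).1 : ℝ) + v.1, z0.2 + t * ((dirZ s).2 : ℝ) + v.2) =
      evalP (anti s P) (z0.1, z0.2) - evalP (anti s Q) (z0.1 + v.1, z0.2 + v.2) := by
    intro P Q v z0 h t
    have := const_line_of (s := s) (κ := anti s P - sb s 0 v (anti s Q)) z0 (by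
      intro t
      rw [map_sub, DV_sb]
      simp [h t]) t
    simpa using this
  have e1 : ∀ u : ℤ × ℤ, u - (1, 1) = u - (1, 0) - (0, 1) := by intro u; ext <;> simp <;> ring
  have e2 : ∀ u : ℤ × ℤ, u - (0, 1) - (1, 0) = u - (1, 0) - (0, 1) := by
    intro u; ext <;> simp <;> ring
  fin_cases s <;> intro u z <;> simp [II, RR, al, be, aa, dirZ, e1, e2]
  · have k := fun u t => key (p u false) (p (u - (0, 1)) true) (0, 1) (0, 0)
      (by intro t; simpa [dirZ] using h u t) t
    have k1 := k u z
    have k2 := k (u - (1, 0)) z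
    have k3 := k (u - (1, 0)) 1
    simp [dirZ, e2, -Prod.forall] at k1 k2 k3
    linarith
  · have k := fun u t => key (p u true) (p (u - (1, 0)) false) (1, 0) (0, 0)
      (by intro t; simpa [dirZ] using h u t) t
    have k1 := k u z
    have k2 := k (u - (0, 1)) z
    have k3 := k (u - (0, 1)) 1
    simp [dirZ, e2, -Prod.forall] at k1 k2 k3
    linarith
  · have k := fun u t => key (p u false) (p u true) (0, 0) (0, 0)
      (by intro t; simpa [dirZ] using h u t) t
    have k1 := k u z
    have k2 := k (u - (1, 0) - (0, 1)) z
    have k3 := k (u - (1, 0) - (0, 1)) 1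
    simp [dirZ, e2, -Prod.forall] at k1 k2 k3
    linarith

/- ### Part 3: the pieces of the box splines -/

/-- decrement a component -/
def dn (s : Fin 3) (n : Fin 3 → ℕ) : Fin 3 → ℕ := Function.update n s (n s - 1)

lemma dn_same (s : Fin 3) (n : Fin 3 → ℕ) : dn s n s = n s - 1 := by simp [dn]
lemma dn_ne {s t : Fin 3} (h : t ≠ s) (n : Fin 3 → ℕ) : dn s n t = n t := by simp [dn, h]
lemma dn_comm (s t : Fin 3) (n : Fin 3 → ℕ) : dn s (dn t n) = dn t (dn s n) := by
  by_cases h : s = t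
  · rw [h]
  · funext r
    by_cases h1 : r = s <;> by_cases h2 : r = t <;> simp_all [dn, Function.update_apply]

/-- two directions are present -/
def Vd (n : Fin 3 → ℕ) : Prop := (1 ≤ n 0 ∧ 1 ≤ n 1) ∨ (1 ≤ n 0 ∧ 1 ≤ n 2) ∨ (1 ≤ n 1 ∧ 1 ≤ n 2)

instance (n : Fin 3 → ℕ) : Decidable (Vd n) := by unfold Vd; infer_instance

lemma Vd_of {j k : Fin 3} (h : j ≠ k) {n : Fin 3 → ℕ} (hj : 1 ≤ n j) (hk : 1 ≤ n k) : Vd n := by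
  fin_cases j <;> fin_cases k <;> simp_all [Vd]

/-- base pieces -/
def bb (n : Fin 3 → ℕ) : Fam := fun u τ =>
  if n 2 = 0 then (if u = (0, 0) then 1 else 0)
  else if n 1 = 0 then
    (cond τ (if u = (1, 0) then 1 else 0) (if u = (0, 0) then 1 else 0))
  else if n 0 = 0 then
    (cond τ (if u = (0, 0) then 1 else 0) (if u = (0, 1) then 1 else 0))
  else cond τ
    (if u = (0, 0) then X 0 else if u = (1, 1) then 1 - X 1 else
      if u = (1, 0) then X 1 - X 0 else 0)
    (if u = (0, 0) then X 1 else if u = (1, 1) then 1 - X 0 else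
      if u = (0, 1) then X 0 - X 1 else 0)

lemma dn_lt {s : Fin 3} {n : Fin 3 → ℕ} (h : 1 ≤ n s) :
    dn s n 0 + dn s n 1 + dn s n 2 < n 0 + n 1 + n 2 := by
  fin_cases s <;> simp [dn, Function.update_apply] at * <;> omega

/-- the local polynomial pieces of the box spline with multiplicities `n` -/
def pp (n : Fin 3 → ℕ) : Fam :=
  if ¬ Vd n then 0
  else if h0 : 2 ≤ n 0 then II 0 (pp (dn 0 n))
  else if h1 : 2 ≤ n 1 then II 1 (pp (dn 1 n))
  else if h2 : 2 ≤ n 2 then II 2 (pp (dn 2 n))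
  else bb n
termination_by n 0 + n 1 + n 2
decreasing_by
  all_goals exact dn_lt (by omega)

lemma pp_inv {n : Fin 3 → ℕ} (h : ¬ Vd n) : pp n = 0 := by
  rw [pp]; simp [h]

lemma pp_bb {n : Fin 3 → ℕ} (h : Vd n) (h' : ∀ t, n t ≤ 1) : pp n = bb n := by
  rw [pp]
  have := h' 0
  have := h' 1
  have := h' 2
  rw [if_neg (not_not.2 h), dif_neg (by omega), dif_neg (by omega), dif_neg (by omega)]

lemma pp_II {n : Fin 3 → ℕ} (h : Vd n) {s : Fin 3} (hs : 2 ≤ n s) (h' : ∀ t, t < s → n t ≤ 1) :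
    pp n = II s (pp (dn s n)) := by
  rw [pp, if_neg (not_not.2 h)]
  fin_cases s
  · simp at hs
    simp [hs]
  · simp at hs
    have := h' 0 (by simp)
    rw [dif_neg (by omega), dif_pos hs]; rfl
  · simp at hs
    have := h' 0 (by simp)
    have := h' 1 (by simp)
    rw [dif_neg (by omega), dif_neg (by omega), dif_pos hs]; rfl

lemma pp_cases (n : Fin 3 → ℕ) : (¬ Vd n) ∨ (Vd n ∧ ∀ t, n t ≤ 1) ∨
    (Vd n ∧ ∃ s, 2 ≤ n s ∧ ∀ t, t < s → n t ≤ 1) := by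
  by_cases h : Vd n
  · right
    by_cases h' : ∀ t, n t ≤ 1
    · exact Or.inl ⟨h, h'⟩
    · right
      refine ⟨h, ?_⟩
      push Not at h'
      obtain ⟨t, ht⟩ := h'
      by_cases h0 : 2 ≤ n 0
      · exact ⟨0, h0, by simp⟩
      by_cases h1 : 2 ≤ n 1
      · refine ⟨1, h1, ?_⟩
        intro t ht
        fin_cases t <;> simp at *
        omega
      by_cases h2 : 2 ≤ n 2
      · refine ⟨2, h2, ?_⟩
        intro t ht
        fin_cases t <;> simp at * <;> omega
      fin_cases t <;> simp at * <;> omega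
  · exact Or.inl h

/-- induction principle -/
lemma n_ind {P : (Fin 3 → ℕ) → Prop}
    (h : ∀ n, (∀ s, 1 ≤ n s → P (dn s n)) → P n) (n : Fin 3 → ℕ) : P n := by
  induction hk : n 0 + n 1 + n 2 using Nat.strong_induction_on generalizing n with
  | _ k ih =>
    apply h
    intro s hs
    exact ih _ (by rw [← hk]; exact dn_lt hs) _ rfl

lemma EC_zero (i : Fin 3) : EC i 0 := by
  fin_cases i <;> intro u z <;> simp

lemma fin3_forall {P : Fin 3 → Prop} : (∀ i, P i) ↔ P 0 ∧ P 1 ∧ P 2 := by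
  constructor
  · intro h; exact ⟨h 0, h 1, h 2⟩
  · rintro ⟨a, b, c⟩ i; fin_cases i <;> assumption

lemma EC_bb {n : Fin 3 → ℕ} (h : Vd n) (h' : ∀ t, n t ≤ 1) {i j k : Fin 3} (hij : i ≠ j)
    (hik : i ≠ k) (hjk : j ≠ k) (h2 : 2 ≤ n j + n k) : EC i (bb n) := by
  have hj : n j = 1 := by have := h' j; have := h' k; omega
  have hk : n k = 1 := by have := h' j; have := h' k; omega
  have hz : ∀ s (_ : Fin 3), s ≠ i → n s = 1 := by
    intro s t hs
    fin_cases i <;> fin_cases j <;> (try exact absurd rfl hij) <;> fin_cases k <;>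
      (try exact absurd rfl hik) <;> (try exact absurd rfl hjk) <;> fin_cases s <;>
      (try exact absurd rfl hs) <;> assumption
  fin_cases i
  · have a := hz 1 0 (by simp); have b := hz 2 0 (by simp)
    rintro ⟨u, v⟩ z
    simp only [bb, a, b]
    simp [Prod.ext_iff]
    split_ifs <;> first | (exfalso; omega) | simp
  · have a := hz 0 0 (by simp); have b := hz 2 0 (by simp)
    rintro ⟨u, v⟩ z
    simp only [bb, a, b]
    simp [Prod.ext_iff]
    split_ifs <;> first | (exfalso; omega) | simp
  · have a := hz 0 0 (by simp); have b := hz 1 0 (by simp)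
    rintro ⟨u, v⟩ z
    simp only [bb, a, b]
    simp [Prod.ext_iff]
    split_ifs <;> first | (exfalso; omega) | simp

lemma EC_pp (n : Fin 3 → ℕ) : ∀ (i j k : Fin 3) (hij : i ≠ j)
    (hik : i ≠ k) (hjk : j ≠ k) (h2 : 2 ≤ n j + n k), EC i (pp n) := by
  induction n using n_ind with | h n ih
  intro i j k hij hik hjk h2
  rcases pp_cases n with h | ⟨h, h'⟩ | ⟨h, s, hs, h'⟩
  · rw [pp_inv h]; exact EC_zero i
  · rw [pp_bb h h']; exact EC_bb h h' hij hik hjk h2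
  · rw [pp_II h hs h']
    by_cases hsi : s = i
    · subst hsi
      apply EC_II_self
      exact ih s (by omega) _ _ _ hij hik hjk (by rw [dn_ne hij.symm, dn_ne hik.symm]; exact h2)
    · exact EC_II_ne hsi _

lemma Vd_congr {n m : Fin 3 → ℕ} (h : ∀ s, 1 ≤ n s → 1 ≤ m s) : Vd n → Vd m := by
  have := h 0
  have := h 1
  have := h 2
  unfold Vd; tauto

lemma Vd_dn {n : Fin 3 → ℕ} {s : Fin 3} (h : Vd (dn s n)) : Vd n := by
  refine Vd_congr ?_ h
  intro t ht
  by_cases e : t = s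
  · subst e; rw [dn_same] at ht; omega
  · rwa [dn_ne e] at ht

lemma DV_bb {n : Fin 3 → ℕ} (h : Vd n) (h' : ∀ t, n t ≤ 1) {s : Fin 3} (hs : 1 ≤ n s)
    (u : ℤ × ℤ) (τ : Bool) :
    DV s (bb n u τ) = pp (dn s n) u τ - pp (dn s n) (u - dirZ s) τ := by
  have h0 := h' 0
  have h1 := h' 1
  have h2 := h' 2
  by_cases hv : Vd (dn s n)
  · have hn : ∀ t, n t = 1 := by
      intro t
      have : s ≠ t → 1 ≤ n t := by
        intro hst
        fin_cases s <;> fin_cases t <;> simp [Vd, dn, Function.update_apply] at * <;> omega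
      have := h' t
      by_cases e : s = t
      · subst e; omega
      · have := this; omega
    rw [pp_bb hv (fun t => by
      by_cases e : t = s
      · subst e; rw [dn_same]; have := h' t; omega
      · rw [dn_ne e]; exact h' t)]
    have a := hn 0
    have b := hn 1
    have c := hn 2
    obtain ⟨u, v⟩ := u
    fin_cases s <;> cases τ <;> simp [bb, dn, a, b, c, Function.update_apply, dirZ, Prod.ext_iff] <;>
      split_ifs <;> first | (exfalso; omega) | simp [dirZ]
  · rw [pp_inv hv]
    have : n 0 = 0 ∨ n 1 = 0 ∨ n 2 = 0 := by
      by_contra hh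
      push Not at hh
      apply hv
      fin_cases s <;> simp [Vd, dn, Function.update_apply] at * <;> omega
    simp only [Pi.zero_apply, sub_self]
    rw [bb]
    have : n 2 = 0 ∨ (n 2 ≠ 0 ∧ n 1 = 0) ∨ (n 2 ≠ 0 ∧ n 1 ≠ 0 ∧ n 0 = 0) := by omega
    rcases this with h | h | h
    · simp only [h, if_true]
      split_ifs <;> simp
    · simp only [h, if_true, if_false]
      cases τ <;> simp <;> split_ifs <;> simp
    · simp only [h, if_true, if_false]
      cases τ <;> simp <;> split_ifs <;> simp

lemma DV_pp (n : Fin 3 → ℕ) : ∀ (t : Fin 3) (ht : 1 ≤ n t) (u : ℤ × ℤ) (τ : Bool),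
    DV t (pp n u τ) = pp (dn t n) u τ - pp (dn t n) (u - dirZ t) τ := by
  induction n using n_ind with | h n ih
  intro t ht u τ
  rcases pp_cases n with h | ⟨h, h'⟩ | ⟨h, s, hs, h'⟩
  · rw [pp_inv h, pp_inv (fun h2 => h (Vd_dn h2))]; simp
  · rw [pp_bb h h']; exact DV_bb h h' ht u τ
  · rw [pp_II h hs h']
    by_cases hst : s = t
    · subst hst; exact DV_II _ _ _ _
    · obtain ⟨r, hsr, htr⟩ : ∃ r : Fin 3, s ≠ r ∧ t ≠ r := by
        revert hst; clear ih hs h' ht; revert s t; decide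
      have ec : EC r (pp (dn s n)) := EC_pp _ _ _ _ hsr.symm htr.symm hst (by
        rw [dn_same, dn_ne (Ne.symm hst)]; omega)
      rw [DV_II_comm hst hsr htr ec]
      have e1 : (fun u τ => DV t (pp (dn s n) u τ)) =
          pp (dn t (dn s n)) - fun u τ => pp (dn t (dn s n)) (u - dirZ t) τ := by
        funext u τ
        exact ih s (by omega) _ (by rw [dn_ne (Ne.symm hst)]; exact ht) u τ
      rw [e1, II_sub]
      simp only [Pi.sub_apply, II_shift]
      have e2 : pp (dn t n) = II s (pp (dn t (dn s n))) := by
        by_cases hv : Vd (dn t n)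
        · rw [dn_comm]
          apply pp_II hv
          · rwa [dn_ne hst]
          · intro r hr
            have := h' r hr
            by_cases e : r = t
            · subst e; rw [dn_same]; omega
            · rwa [dn_ne e]
        · rw [pp_inv hv, pp_inv, II_zero]
          intro hv2
          apply hv
          rw [dn_comm] at hv2
          exact Vd_dn hv2
      rw [e2]

/-- the support hexagon -/
def HH (n : Fin 3 → ℕ) (u : ℤ × ℤ) (τ : Bool) : Prop :=
  0 ≤ u.1 ∧ u.1 + 1 ≤ n 0 + n 2 ∧ 0 ≤ u.2 ∧ u.2 + 1 ≤ n 1 + n 2 ∧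
    cond τ (1 ≤ u.1 - u.2 + n 1 ∧ u.1 - u.2 ≤ n 0) (0 ≤ u.1 - u.2 + n 1 ∧ u.1 - u.2 + 1 ≤ n 0)

lemma HH_bb {n : Fin 3 → ℕ} (h : Vd n) (h' : ∀ t, n t ≤ 1) (u : ℤ × ℤ) (τ : Bool)
    (hu : bb n u τ ≠ 0) : HH n u τ := by
  have h0 := h' 0
  have h1 := h' 1
  have h2 := h' 2
  obtain ⟨u, v⟩ := u
  cases τ <;> simp [bb, HH, Vd, Prod.ext_iff] at * <;> split_ifs at hu <;> (try simp at hu) <;> omega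

lemma HH_dn0 {n : Fin 3 → ℕ} {s : Fin 3} (hs : 1 ≤ n s) {u : ℤ × ℤ} {τ : Bool}
    (h : HH (dn s n) u τ) : HH n u τ := by
  fin_cases s <;> cases τ <;> simp [HH, dn, Function.update_apply] at h hs ⊢ <;> omega
lemma HH_dn1 {n : Fin 3 → ℕ} {s : Fin 3} (hs : 1 ≤ n s) {u : ℤ × ℤ} {τ : Bool}
    (h : HH (dn s n) (u - aa s τ) (!τ)) : HH n u τ := by
  fin_cases s <;> cases τ <;> simp [HH, dn, Function.update_apply, aa] at h hs ⊢ <;> omega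
lemma HH_dn2 {n : Fin 3 → ℕ} {s : Fin 3} (hs : 1 ≤ n s) {u : ℤ × ℤ} {τ : Bool}
    (h : HH (dn s n) (u - dirZ s) τ) : HH n u τ := by
  fin_cases s <;> cases τ <;> simp [HH, dn, Function.update_apply, dirZ] at h hs ⊢ <;> omega

lemma HH_pp (n : Fin 3 → ℕ) : ∀ (u : ℤ × ℤ) (τ : Bool), pp n u τ ≠ 0 → HH n u τ := by
  induction n using n_ind with | h n ih
  intro u τ hu
  rcases pp_cases n with h | ⟨h, h'⟩ | ⟨h, s, hs, h'⟩
  · rw [pp_inv h] at hu; simp at hu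
  · rw [pp_bb h h'] at hu; exact HH_bb h h' u τ hu
  · rw [pp_II h hs h'] at hu
    have ih := ih s (by omega)
    by_contra hh
    apply hu
    have z0 : pp (dn s n) u τ = 0 := by
      by_contra h0
      apply hh
      exact HH_dn0 (by omega) (ih _ _ h0)
    have z1 : pp (dn s n) (u - aa s τ) (!τ) = 0 := by
      by_contra h0
      apply hh
      exact HH_dn1 (by omega) (ih _ _ h0)
    have z2 : pp (dn s n) (u - dirZ s) τ = 0 := by
      by_contra h0
      apply hh
      exact HH_dn2 (by omega) (ih _ _ h0)
    rw [II, z0, z1, z2, map_zero]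
    exact RR_zero (map_zero _) (map_zero _) (map_zero _)

lemma HH_fin (n : Fin 3 → ℕ) (τ : Bool) : {u | HH n u τ}.Finite := by
  apply Set.Finite.subset (Set.finite_Icc (0, 0) (((n 0 + n 2 : ℕ) : ℤ), ((n 1 + n 2 : ℕ) : ℤ)))
  rintro ⟨u, v⟩ h
  simp [HH] at h
  simp [Prod.le_def]
  omega

lemma pp_supp (n : Fin 3 → ℕ) (τ : Bool) : (Function.support fun u => pp n u τ).Finite :=
  (HH_fin n τ).subset fun u hu => HH_pp n u τ hu

/- ### Part 4: linear combinations of translates -/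

lemma finsum_shift {M : Type*} [AddCommMonoid M] (f : ℤ × ℤ → M) (v : ℤ × ℤ) :
    ∑ᶠ u, f (u - v) = ∑ᶠ u, f u :=
  finsum_comp_equiv (f := f) (Equiv.subRight v)

lemma supp_shift {f : ℤ × ℤ → BPoly} (h : (support f).Finite) (v : ℤ × ℤ) :
    (support fun u => f (u - v)).Finite := by
  have : (support fun u => f (u - v)) = (fun u => u - v) ⁻¹' support f := rfl
  rw [this]
  exact h.preimage (sub_left_injective.injOn)

lemma supp_map {f : ℤ × ℤ → BPoly} (h : (support f).Finite) (L : BPoly →ₗ[ℝ] BPoly) :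
    (support fun u => L (f u)).Finite := by
  apply h.subset
  intro u hu h0
  apply hu
  simp only [h0, map_zero]

/-- the maps occurring in `RR` -/
def L0 (s : Fin 3) (τ : Bool) : BPoly →ₗ[ℝ] BPoly := LinearMap.id - (sb s (al s τ) 0).toLinearMap
def L1 (s : Fin 3) (τ : Bool) : BPoly →ₗ[ℝ] BPoly :=
  (sb s (al s τ) (aa s τ)).toLinearMap - (sb s (be s τ) (aa s τ)).toLinearMap
def L2 (s : Fin 3) (τ : Bool) : BPoly →ₗ[ℝ] BPoly :=
  (sb s (be s τ) (dirZ s)).toLinearMap - LinearMap.id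

lemma II_L (s : Fin 3) (p : Fam) (u : ℤ × ℤ) (τ : Bool) : II s p u τ =
    (L0 s τ ∘ₗ anti s) (p u τ) + (L1 s τ ∘ₗ anti s) (p (u - aa s τ) (!τ)) +
      (L2 s τ ∘ₗ anti s) (p (u - dirZ s) τ) := by
  simp [II, RR, L0, L1, L2]

lemma II_one (s : Fin 3) (u : ℤ × ℤ) (τ : Bool) : II s (fun _ _ => 1) u τ = 1 := by
  rw [RR_eq_II (p := fun _ _ => 1) (DV_al s τ) (DV_al s τ) (DV_al s τ)]
  apply evalP_ext
  intro p
  fin_cases s <;> cases τ <;> simp [RR, al, be, aa, dirZ] <;> ring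

lemma finsum_II (s : Fin 3) (p : Fam) (τ : Bool) (hf : ∀ τ, (support fun u => p u τ).Finite)
    (h1 : ∀ τ, ∑ᶠ u, p u τ = 1) : ∑ᶠ u, II s p u τ = 1 := by
  have ho := II_one s 0 τ
  rw [II_L] at ho
  simp only [II_L]
  have f0 := supp_map (hf τ) (L0 s τ ∘ₗ anti s)
  have f1 := supp_map (supp_shift (hf (!τ)) (aa s τ)) (L1 s τ ∘ₗ anti s)
  have f2 := supp_map (supp_shift (hf τ) (dirZ s)) (L2 s τ ∘ₗ anti s)
  rw [finsum_add_distrib ((f0.union f1).subset (support_add _ _)) f2, finsum_add_distrib f0 f1]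
  have m0 := (L0 s τ ∘ₗ anti s).toAddMonoidHom.map_finsum (hf τ)
  have m1 := (L1 s τ ∘ₗ anti s).toAddMonoidHom.map_finsum (supp_shift (hf (!τ)) (aa s τ))
  have m2 := (L2 s τ ∘ₗ anti s).toAddMonoidHom.map_finsum (supp_shift (hf τ) (dirZ s))
  rw [finsum_shift (fun u => p u (!τ)), h1] at m1
  rw [finsum_shift (fun u => p u τ), h1] at m2
  rw [h1] at m0
  simp only [LinearMap.toAddMonoidHom_coe] at m0 m1 m2
  rw [← m0, ← m1, ← m2]
  exact ho

lemma finsum_of_subset {f : ℤ × ℤ → BPoly} (S : Finset (ℤ × ℤ)) (h : ∀ u, f u ≠ 0 → u ∈ S) :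
    ∑ᶠ u, f u = ∑ u ∈ S, f u :=
  finsum_eq_sum_of_support_subset _ (fun u hu => h u hu)

lemma pp_sum (n : Fin 3 → ℕ) (hn : Vd n) : ∀ τ, ∑ᶠ u, pp n u τ = 1 := by
  induction n using n_ind with | h n ih
  intro τ
  rcases pp_cases n with h | ⟨h, h'⟩ | ⟨h, s, hs, h'⟩
  · exact absurd hn h
  · rw [finsum_of_subset {(0, 0), (1, 1), (0, 1), (1, 0)}]
    · have h0 := h' 0
      have h1 := h' 1
      have h2 := h' 2
      simp only [pp_bb h h', bb]
      rw [Finset.sum_insert (by simp), Finset.sum_insert (by simp), Finset.sum_insert (by simp),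
        Finset.sum_singleton]
      unfold Vd at hn
      cases τ <;> simp <;> split_ifs <;> first | (exfalso; omega) | simp | ring
    · intro u hu
      have hh := HH_pp n u τ hu
      have h0 := h' 0
      have h1 := h' 1
      have h2 := h' 2
      obtain ⟨u, v⟩ := u
      simp [HH] at hh
      simp [Prod.ext_iff]
      omega
  · rw [pp_II h hs h']
    refine finsum_II s _ τ (fun τ => pp_supp _ τ) (ih s (by omega) ?_)
    refine Vd_congr ?_ h
    intro t ht
    by_cases e : t = s
    · subst e; rw [dn_same]; omega
    · rwa [dn_ne e]

/-- linear combination of the translates -/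
def FF (n : Fin 3 → ℕ) (τ : Bool) (a : ℤ × ℤ → ℝ) : BPoly := ∑ᶠ u, a u • pp n u τ

lemma sm_supp (n : Fin 3 → ℕ) (τ : Bool) (a : ℤ × ℤ → ℝ) :
    (support fun u => a u • pp n u τ).Finite := by
  apply (pp_supp n τ).subset
  intro u hu h0
  apply hu
  simp only at h0
  simp only [h0, smul_zero]

lemma FF_add (n : Fin 3 → ℕ) (τ : Bool) (a b : ℤ × ℤ → ℝ) :
    FF n τ (a + b) = FF n τ a + FF n τ b := by
  rw [FF, FF, FF, ← finsum_add_distrib (sm_supp n τ a) (sm_supp n τ b)]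
  simp [add_smul]

lemma FF_smul (n : Fin 3 → ℕ) (τ : Bool) (r : ℝ) (a : ℤ × ℤ → ℝ) :
    FF n τ (r • a) = r • FF n τ a := by
  rw [FF, FF, smul_finsum]
  simp [mul_smul]

lemma FF_sub (n : Fin 3 → ℕ) (τ : Bool) (a b : ℤ × ℤ → ℝ) :
    FF n τ (a - b) = FF n τ a - FF n τ b := by
  have := FF_add n τ a ((-1 : ℝ) • b)
  rw [FF_smul] at this
  rw [sub_eq_add_neg, sub_eq_add_neg]
  simpa using this

lemma FF_const {n : Fin 3 → ℕ} (hn : Vd n) (τ : Bool) (κ : ℝ) : FF n τ (fun _ => κ) = C κ := by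
  rw [FF, ← smul_finsum, pp_sum n hn, smul_eq_C_mul, mul_one]

lemma FF_inv {n : Fin 3 → ℕ} (hn : ¬ Vd n) (τ : Bool) (a : ℤ × ℤ → ℝ) : FF n τ a = 0 := by
  simp [FF, pp_inv hn]

lemma DV_FF {n : Fin 3 → ℕ} {s : Fin 3} (hs : 1 ≤ n s) (τ : Bool) (a : ℤ × ℤ → ℝ) :
    DV s (FF n τ a) = FF (dn s n) τ (fun u => a u - a (u + dirZ s)) := by
  have e := (DV s).toLinearMap.toAddMonoidHom.map_finsum (sm_supp n τ a)
  have e' : DV s (FF n τ a) = ∑ᶠ u, (a u • pp (dn s n) u τ - a u • pp (dn s n) (u - dirZ s) τ) := by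
    simp only [LinearMap.toAddMonoidHom_coe, Derivation.coeFn_coe, map_smul, DV_pp n s hs,
      smul_sub] at e
    exact e
  rw [e']
  have hs2 : (support fun u => a u • pp (dn s n) (u - dirZ s) τ).Finite := by
    have := supp_shift (sm_supp (dn s n) τ (fun u => a (u + dirZ s))) (dirZ s)
    simpa using this
  rw [finsum_sub_distrib (sm_supp _ _ _) hs2]
  have := finsum_shift (fun u => a (u + dirZ s) • pp (dn s n) u τ) (dirZ s)
  simp only [sub_add_cancel] at this
  rw [this, ← FF, ← FF, ← FF_sub]
  rfl

lemma FF_congr {n : Fin 3 → ℕ} {τ : Bool} {a b : ℤ × ℤ → ℝ} (h : ∀ u, HH n u τ → a u = b u) :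
    FF n τ a = FF n τ b := by
  apply finsum_congr
  intro u
  by_cases hu : pp n u τ = 0
  · simp [hu]
  · rw [h u (HH_pp n u τ hu)]

/- ### Part 5: the pieces of `boxN` -/

lemma seg_int (s : Fin 3) (P : BPoly) (y : Pt) {a b : ℝ} (hab : a ≤ b) (f : ℝ → ℝ)
    (h : ∀ t ∈ Ioo a b, f t = evalP P (y.1 - (dirZ s).1 * t, y.2 - (dirZ s).2 * t)) :
    IntervalIntegrable f MeasureTheory.volume a b ∧
    ∫ t in a..b, f t = evalP (anti s P) (y.1 - (dirZ s).1 * a, y.2 - (dirZ s).2 * a) -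
      evalP (anti s P) (y.1 - (dirZ s).1 * b, y.2 - (dirZ s).2 * b) := by
  have hc : ∀ Q : BPoly, Continuous fun t : ℝ =>
      evalP Q (y.1 - (dirZ s).1 * t, y.2 - (dirZ s).2 * t) := by
    intro Q
    exact (continuous_evalP Q).comp (by fun_prop)
  have hd : ∀ t : ℝ, HasDerivAt (fun t : ℝ =>
      - evalP (anti s P) (y.1 - (dirZ s).1 * t, y.2 - (dirZ s).2 * t))
      (evalP P (y.1 - (dirZ s).1 * t, y.2 - (dirZ s).2 * t)) t := by
    intro t
    have h1 := hasDerivAt_line (anti s P) s y (-t)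
    have h2 := (h1.scomp t (hasDerivAt_neg t)).neg
    rw [DV_anti] at h2
    have h3 : HasDerivAt (fun t : ℝ => - evalP (anti s P) (y.1 + -t * ((dirZ s).1 : ℝ),
      y.2 + -t * ((dirZ s).2 : ℝ))) (-((-1 : ℝ) • evalP P (y.1 + -t * ((dirZ s).1 : ℝ),
      y.2 + -t * ((dirZ s).2 : ℝ)))) t := h2
    simpa [sub_eq_add_neg, mul_comm] using h3
  have hi : IntervalIntegrable f MeasureTheory.volume a b := by
    rw [intervalIntegrable_iff_integrableOn_Ioo_of_le hab]
    have : MeasureTheory.IntegrableOn (fun t : ℝ =>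
      evalP P (y.1 - (dirZ s).1 * t, y.2 - (dirZ s).2 * t)) (Ioo a b) MeasureTheory.volume := by
      rw [← intervalIntegrable_iff_integrableOn_Ioo_of_le hab]
      exact (hc P).intervalIntegrable a b
    exact this.congr_fun (fun t ht => (h t ht).symm) measurableSet_Ioo
  refine ⟨hi, ?_⟩
  rw [intervalIntegral.integral_eq_sub_of_hasDerivAt_of_le hab
    ((hc (anti s P)).neg.continuousOn) (fun t ht => by rw [h t ht]; exact hd t) hi]
  simp only [Pi.neg_apply]
  ring

/-- `B` has pieces `p` -/
def HasPieces (B : Pt → ℝ) (p : Fam) : Prop :=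
  ∀ (u : ℤ × ℤ) (τ : Bool) (q : Pt), q ∈ Tri.toSet ⟨u, τ⟩ → B q = evalP (p u τ) (q.1 - u.1, q.2 - u.2)

lemma HasPieces_II {B : Pt → ℝ} {p : Fam} (h : HasPieces B p) (s : Fin 3) :
    HasPieces (fun q => ∫ t in (0:ℝ)..1, B (q.1 - (dirZ s).1 * t, q.2 - (dirZ s).2 * t)) (II s p) := by
  intro u τ q hq
  set x : Pt := (q.1 - u.1, q.2 - u.2) with hx
  set α := evalP (al s τ) x with hα
  set β := evalP (be s τ) x with hβ
  have hαβ : 0 < α ∧ α < β ∧ β < 1 := by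
    rw [hα, hβ, hx]
    fin_cases s <;> cases τ <;> simp [Tri.toSet, al, be] at hq ⊢ <;>
      refine ⟨?_, ?_, ?_⟩ <;> linarith
  have s1 := seg_int s (p u τ) x hαβ.1.le
    (fun t => B (q.1 - (dirZ s).1 * t, q.2 - (dirZ s).2 * t)) (by
      rintro t ⟨ht1, ht2⟩
      rw [h u τ]
      · simp only [hx]; congr 1; ext <;> simp <;> ring
      · rw [hα, hx] at ht2
        fin_cases s <;> cases τ <;> simp [Tri.toSet, al, dirZ] at hq ht2 ⊢ <;>
          refine ⟨?_, ?_, ?_⟩ <;> linarith)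
  have s2 := seg_int s (p (u - aa s τ) (!τ)) (x.1 + (aa s τ).1, x.2 + (aa s τ).2) hαβ.2.1.le
    (fun t => B (q.1 - (dirZ s).1 * t, q.2 - (dirZ s).2 * t)) (by
      rintro t ⟨ht1, ht2⟩
      rw [h (u - aa s τ) (!τ)]
      · simp only [hx]; congr 1; ext <;> simp <;> ring
      · rw [hβ, hx] at ht2
        rw [hα, hx] at ht1
        fin_cases s <;> cases τ <;> simp [Tri.toSet, al, be, aa, dirZ] at hq ht1 ht2 ⊢ <;>
          refine ⟨?_, ?_, ?_⟩ <;> linarith)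
  have s3 := seg_int s (p (u - dirZ s) τ) (x.1 + (dirZ s).1, x.2 + (dirZ s).2) hαβ.2.2.le
    (fun t => B (q.1 - (dirZ s).1 * t, q.2 - (dirZ s).2 * t)) (by
      rintro t ⟨ht1, ht2⟩
      rw [h (u - dirZ s) τ]
      · simp only [hx]; congr 1; ext <;> simp <;> ring
      · rw [hβ, hx] at ht1
        fin_cases s <;> cases τ <;> simp [Tri.toSet, be, dirZ] at hq ht1 ⊢ <;>
          refine ⟨?_, ?_, ?_⟩ <;> linarith)
  show (∫ t in (0:ℝ)..1, B (q.1 - (dirZ s).1 * t, q.2 - (dirZ s).2 * t)) = _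
  rw [← intervalIntegral.integral_add_adjacent_intervals (s1.1.trans s2.1) s3.1,
    ← intervalIntegral.integral_add_adjacent_intervals s1.1 s2.1, s1.2, s2.2, s3.2]
  simp only [II, RR, evalP_add, evalP_sub, evalP_sb, ← hα, ← hβ]
  have e : ∀ z w v : ℝ, z - w + v = z + v - w := by intros; ring
  simp [e]

lemma hat_zero {p : Pt} (h : p.1 ≤ 0 ∨ p.2 ≤ 0 ∨ 2 ≤ p.1 ∨ 2 ≤ p.2 ∨ 1 ≤ p.1 - p.2 ∨
    p.1 - p.2 ≤ -1) : hat p = 0 := by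
  rw [hat, max_eq_left]
  rw [min_le_iff, min_le_iff, min_le_iff, min_le_iff, min_le_iff]
  rcases h with h | h | h | h | h | h
  · left; left; left; linarith
  · left; left; right; linarith
  · left; right; left; linarith
  · left; right; right; linarith
  · right; left; linarith
  · right; right; linarith

lemma HasPieces_hat : HasPieces hat (bb ![1, 1, 1]) := by
  rintro ⟨u, v⟩ τ ⟨x, y⟩ hq
  cases τ
  · simp [Tri.toSet, bb, Prod.ext_iff] at hq ⊢
    split_ifs with h1 h2 h3
    · simp [h1] at *
      rw [hat, max_eq_right] <;> simp only [le_min_iff]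
      · apply le_antisymm
        · simp only [min_le_iff]
          grind
        · simp only [le_min_iff]
          refine ⟨⟨⟨?_, ?_⟩, ?_, ?_⟩, ?_, ?_⟩ <;> linarith
      · refine ⟨⟨⟨?_, ?_⟩, ?_, ?_⟩, ?_, ?_⟩ <;> linarith
    · simp [h2] at *
      rw [hat, max_eq_right] <;> simp only [le_min_iff]
      · apply le_antisymm
        · simp only [min_le_iff]
          grind
        · simp only [le_min_iff]
          refine ⟨⟨⟨?_, ?_⟩, ?_, ?_⟩, ?_, ?_⟩ <;> linarith
      · refine ⟨⟨⟨?_, ?_⟩, ?_, ?_⟩, ?_, ?_⟩ <;> linarith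
    · simp [h3] at *
      rw [hat, max_eq_right] <;> simp only [le_min_iff]
      · apply le_antisymm
        · simp only [min_le_iff]
          grind
        · simp only [le_min_iff]
          refine ⟨⟨⟨?_, ?_⟩, ?_, ?_⟩, ?_, ?_⟩ <;> linarith
      · refine ⟨⟨⟨?_, ?_⟩, ?_, ?_⟩, ?_, ?_⟩ <;> linarith
    · simp
      apply hat_zero
      have : u ≤ -1 ∨ v ≤ -1 ∨ 2 ≤ u ∨ 2 ≤ v ∨ 1 ≤ u - v := by omega
      simp only
      rcases this with h | h | h | h | h
      · have : (u : ℝ) ≤ -1 := by exact_mod_cast h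
        left; linarith
      · have : (v : ℝ) ≤ -1 := by exact_mod_cast h
        right; left; linarith
      · have : 2 ≤ (u : ℝ) := by exact_mod_cast h
        right; right; left; linarith
      · have : 2 ≤ (v : ℝ) := by exact_mod_cast h
        right; right; right; left; linarith
      · have : 1 ≤ (u : ℝ) - v := by exact_mod_cast h
        right; right; right; right; left; linarith
  · simp [Tri.toSet, bb, Prod.ext_iff] at hq ⊢
    split_ifs with h1 h2 h3
    · simp [h1] at *
      rw [hat, max_eq_right] <;> simp only [le_min_iff]
      · apply le_antisymm
        · simp only [min_le_iff]
          grind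
        · simp only [le_min_iff]
          refine ⟨⟨⟨?_, ?_⟩, ?_, ?_⟩, ?_, ?_⟩ <;> linarith
      · refine ⟨⟨⟨?_, ?_⟩, ?_, ?_⟩, ?_, ?_⟩ <;> linarith
    · simp [h2] at *
      rw [hat, max_eq_right] <;> simp only [le_min_iff]
      · apply le_antisymm
        · simp only [min_le_iff]
          grind
        · simp only [le_min_iff]
          refine ⟨⟨⟨?_, ?_⟩, ?_, ?_⟩, ?_, ?_⟩ <;> linarith
      · refine ⟨⟨⟨?_, ?_⟩, ?_, ?_⟩, ?_, ?_⟩ <;> linarith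
    · simp [h3] at *
      rw [hat, max_eq_right] <;> simp only [le_min_iff]
      · apply le_antisymm
        · simp only [min_le_iff]
          grind
        · simp only [le_min_iff]
          refine ⟨⟨⟨?_, ?_⟩, ?_, ?_⟩, ?_, ?_⟩ <;> linarith
      · refine ⟨⟨⟨?_, ?_⟩, ?_, ?_⟩, ?_, ?_⟩ <;> linarith
    · simp
      apply hat_zero
      have : u ≤ -1 ∨ v ≤ -1 ∨ 2 ≤ u ∨ 2 ≤ v ∨ u - v ≤ -1 := by omega
      simp only
      rcases this with h | h | h | h | h
      · have : (u : ℝ) ≤ -1 := by exact_mod_cast h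
        left; linarith
      · have : (v : ℝ) ≤ -1 := by exact_mod_cast h
        right; left; linarith
      · have : 2 ≤ (u : ℝ) := by exact_mod_cast h
        right; right; left; linarith
      · have : 2 ≤ (v : ℝ) := by exact_mod_cast h
        right; right; right; left; linarith
      · have : (u : ℝ) - v ≤ -1 := by exact_mod_cast h
        right; right; right; right; right; linarith

lemma HasPieces_box (a b c : ℕ) : HasPieces (boxN (a + 1) (b + 1) (c + 1)) (pp ![a + 1, b + 1, c + 1]) := by
  induction a with
  | zero =>
    induction b with
    | zero =>
      induction c with
      | zero =>
        have : boxN (0 + 1) (0 + 1) (0 + 1) = hat := by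
          funext p; rw [boxN]
        rw [this]
        rw [pp_bb (by simp [Vd]) (by intro t; fin_cases t <;> simp)]
        exact HasPieces_hat
      | succ c ih =>
        have := HasPieces_II ih 2
        rw [pp_II (s := 2) (by simp [Vd]) (by simp) (by intro t; fin_cases t <;> simp)]
        have e : dn 2 ![0 + 1, 0 + 1, c + 1 + 1] = ![0 + 1, 0 + 1, c + 1] := by
          funext t; fin_cases t <;> simp [dn]
        rw [e]
        convert this using 1
        funext p
        rw [boxN]
        simp [dirZ]
    | succ b ih =>
        have := HasPieces_II ih 1
        rw [pp_II (s := 1) (by simp [Vd]) (by simp) (by intro t; fin_cases t <;> simp)]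
        have e : dn 1 ![0 + 1, b + 1 + 1, c + 1] = ![0 + 1, b + 1, c + 1] := by
          funext t; fin_cases t <;> simp [dn]
        rw [e]
        convert this using 1
        funext p
        rw [boxN]
        simp [dirZ]
  | succ a ih =>
        have := HasPieces_II ih 0
        rw [pp_II (s := 0) (by simp [Vd]) (by simp) (by intro t; fin_cases t <;> simp)]
        have e : dn 0 ![a + 1 + 1, b + 1, c + 1] = ![a + 1, b + 1, c + 1] := by
          funext t; fin_cases t <;> simp [dn]
        rw [e]
        convert this using 1
        funext p
        rw [boxN]
        simp [dirZ]

/- ### Part 6: connectivity, divisibility, uniqueness -/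

/-- hexagonal region -/
def Rg (n0 n1 n2 A B c d x y : ℤ) : Prop :=
  A ≤ x ∧ x + 1 ≤ n0 + n2 ∧ B ≤ y ∧ y + 1 ≤ n1 + n2 ∧ c ≤ x - y + n1 ∧ x - y + d ≤ n0

lemma conn3 (n0 n1 n2 A B c d : ℤ) (hp0 : 0 ≤ n0) (hp1 : 0 ≤ n1) (hp2 : 0 ≤ n2)
    (hv : (1 ≤ n0 ∧ 1 ≤ n1) ∨ (1 ≤ n0 ∧ 1 ≤ n2) ∨ (1 ≤ n1 ∧ 1 ≤ n2))
    (hc : 0 ≤ c) (hd : 0 ≤ d) (hAB : B ≤ A + d) (hBA : A ≤ B + c) (hdB : d ≤ B + 1) (hcA : c ≤ A + 1)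
    (a : ℤ → ℤ → ℝ)
    (h0 : 1 ≤ n0 → ∀ x y, Rg n0 n1 n2 A B c d x y → Rg n0 n1 n2 A B c d (x + 1) y →
      a x y = a (x + 1) y)
    (h1 : 1 ≤ n1 → ∀ x y, Rg n0 n1 n2 A B c d x y → Rg n0 n1 n2 A B c d x (y + 1) →
      a x y = a x (y + 1))
    (h2 : 1 ≤ n2 → ∀ x y, Rg n0 n1 n2 A B c d x y → Rg n0 n1 n2 A B c d (x + 1) (y + 1) →
      a x y = a (x + 1) (y + 1)) :
    ∀ x y x' y', Rg n0 n1 n2 A B c d x y → Rg n0 n1 n2 A B c d x' y' → a x y = a x' y' := by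
  by_cases z0 : n0 = 0
  · suffices H : ∀ (k : ℕ) (x y x' y' : ℤ), (x' - x).natAbs + (y' - x' - (y - x)).natAbs = k →
        Rg n0 n1 n2 A B c d x y → Rg n0 n1 n2 A B c d x' y' → a x y = a x' y' by
      intro x y x' y'; exact H _ x y x' y' rfl
    intro k
    induction k using Nat.strong_induction_on with
    | _ k ih =>
      intro x y x' y' hk hR hR'
      rcases lt_trichotomy x x' with hx | hx | hx
      · have r : Rg n0 n1 n2 A B c d (x + 1) (y + 1) := by unfold Rg at *; omega
        rw [h2 (by omega) x y hR r]
        exact ih _ (by omega) _ _ _ _ rfl r hR'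
      · rcases lt_trichotomy y y' with hy | hy | hy
        · have r : Rg n0 n1 n2 A B c d x (y + 1) := by unfold Rg at *; omega
          rw [h1 (by omega) x y hR r]
          exact ih _ (by omega) _ _ _ _ rfl r hR'
        · rw [hx, hy]
        · have r : Rg n0 n1 n2 A B c d x' (y' + 1) := by unfold Rg at *; omega
          rw [h1 (by omega) x' y' hR' r]
          exact ih _ (by omega) _ _ _ _ rfl hR r
      · have r : Rg n0 n1 n2 A B c d (x' + 1) (y' + 1) := by unfold Rg at *; omega
        rw [h2 (by omega) x' y' hR' r]
        exact ih _ (by omega) _ _ _ _ rfl hR r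
  by_cases z1 : n1 = 0
  · suffices H : ∀ (k : ℕ) (x y x' y' : ℤ), (y' - y).natAbs + (y' - x' - (y - x)).natAbs = k →
        Rg n0 n1 n2 A B c d x y → Rg n0 n1 n2 A B c d x' y' → a x y = a x' y' by
      intro x y x' y'; exact H _ x y x' y' rfl
    intro k
    induction k using Nat.strong_induction_on with
    | _ k ih =>
      intro x y x' y' hk hR hR'
      rcases lt_trichotomy y y' with hx | hx | hx
      · have r : Rg n0 n1 n2 A B c d (x + 1) (y + 1) := by unfold Rg at *; omega
        rw [h2 (by omega) x y hR r]
        exact ih _ (by omega) _ _ _ _ rfl r hR'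
      · rcases lt_trichotomy x x' with hy | hy | hy
        · have r : Rg n0 n1 n2 A B c d (x + 1) y := by unfold Rg at *; omega
          rw [h0 (by omega) x y hR r]
          exact ih _ (by omega) _ _ _ _ rfl r hR'
        · rw [hx, hy]
        · have r : Rg n0 n1 n2 A B c d (x' + 1) y' := by unfold Rg at *; omega
          rw [h0 (by omega) x' y' hR' r]
          exact ih _ (by omega) _ _ _ _ rfl hR r
      · have r : Rg n0 n1 n2 A B c d (x' + 1) (y' + 1) := by unfold Rg at *; omega
        rw [h2 (by omega) x' y' hR' r]
        exact ih _ (by omega) _ _ _ _ rfl hR r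
  suffices H : ∀ (k : ℕ) (x y x' y' : ℤ), (x' - x).natAbs + (y' - y).natAbs = k →
      Rg n0 n1 n2 A B c d x y → Rg n0 n1 n2 A B c d x' y' → a x y = a x' y' by
    intro x y x' y'; exact H _ x y x' y' rfl
  intro k
  induction k using Nat.strong_induction_on with
  | _ k ih =>
    intro x y x' y' hk hR hR'
    by_cases c1 : x < x' ∧ y < y' ∧ 1 ≤ n2
    · have r : Rg n0 n1 n2 A B c d (x + 1) (y + 1) := by unfold Rg at *; omega
      rw [h2 (by omega) x y hR r]
      exact ih _ (by omega) _ _ _ _ rfl r hR'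
    by_cases c2 : x' < x ∧ y' < y ∧ 1 ≤ n2
    · have r : Rg n0 n1 n2 A B c d (x' + 1) (y' + 1) := by unfold Rg at *; omega
      rw [h2 (by omega) x' y' hR' r]
      exact ih _ (by omega) _ _ _ _ rfl hR r
    by_cases c3 : x < x'
    · have r : Rg n0 n1 n2 A B c d (x + 1) y := by unfold Rg at *; omega
      rw [h0 (by omega) x y hR r]
      exact ih _ (by omega) _ _ _ _ rfl r hR'
    by_cases c4 : x' < x
    · have r : Rg n0 n1 n2 A B c d (x' + 1) y' := by unfold Rg at *; omega
      rw [h0 (by omega) x' y' hR' r]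
      exact ih _ (by omega) _ _ _ _ rfl hR r
    have hx : x = x' := by omega
    by_cases c5 : y < y'
    · have r : Rg n0 n1 n2 A B c d x (y + 1) := by unfold Rg at *; omega
      rw [h1 (by omega) x y hR r]
      exact ih _ (by omega) _ _ _ _ rfl r hR'
    by_cases c6 : y' < y
    · have r : Rg n0 n1 n2 A B c d x' (y' + 1) := by unfold Rg at *; omega
      rw [h1 (by omega) x' y' hR' r]
      exact ih _ (by omega) _ _ _ _ rfl hR r
    have hy : y = y' := by omega
    rw [hx, hy]

/-- the linear form of an edge type -/
def ln (i : Fin 3) : BPoly := ![X 1, X 0, X 0 - X 1] i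
/-- shift for the lower cell -/
def lam (i : Fin 3) : ℤ × ℤ := ![0, (1, 0), 0] i
/-- shift for the upper cell -/
def mu (i : Fin 3) : ℤ × ℤ := ![(0, 1), 0, 0] i

/-- vanishing on the edge line -/
def VL (i : Fin 3) (q : BPoly) : Prop := ∀ z : ℝ, evalP q (![(z, 0), (0, z), (z, z)] i) = 0

/-- reduction modulo the edge line -/
def rd (i : Fin 3) : BPoly →ₐ[ℝ] BPoly :=
  MvPolynomial.aeval (![![X 0, 0], ![0, X 1], ![X 1, X 1]] i : Fin 2 → BPoly)

lemma dvd_sub_rd (i : Fin 3) (q : BPoly) : ln i ∣ q - rd i q := by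
  induction q using MvPolynomial.induction_on with
  | C a => simp [rd, MvPolynomial.algebraMap_eq]
  | add p q hp hq =>
    rw [map_add]
    have := dvd_add hp hq
    convert this using 1; ring
  | mul_X p j hp =>
    rw [map_mul]
    have hX : ln i ∣ X j - rd i (X j) := by
      fin_cases i <;> fin_cases j <;> simp [rd, ln]
    have := dvd_add (hp.mul_right (X j)) (hX.mul_left (rd i p))
    convert this using 1; ring

lemma ln_dvd {i : Fin 3} {q : BPoly} (h : VL i q) : ln i ∣ q := by
  have h0 : rd i q = 0 := by
    apply evalP_ext
    intro p
    rw [rd]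
    fin_cases i
    · have := h p.1
      show evalP (aeval ![X 0, 0] q) p = evalP 0 p
      rw [evalP_aeval]; simpa using this
    · have := h p.2
      show evalP (aeval ![0, X 1] q) p = evalP 0 p
      rw [evalP_aeval]; simpa using this
    · have := h p.2
      show evalP (aeval ![X 1, X 1] q) p = evalP 0 p
      rw [evalP_aeval]; simpa using this
  simpa [h0] using dvd_sub_rd i q

lemma VL_of_dvd {i : Fin 3} {q : BPoly} (h : ln i ∣ q) : VL i q := by
  obtain ⟨r, rfl⟩ := h
  intro z
  fin_cases i <;> simp [ln]

lemma ln_ne (i : Fin 3) : ln i ≠ 0 := by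
  intro h
  have : evalP (ln i) (2, 1) = 0 := by rw [h]; simp
  fin_cases i <;> simp [ln] at this
  norm_num at this

lemma DV_ln_self (i : Fin 3) : DV i (ln i) = 0 := by
  fin_cases i <;> simp [ln, dirZ]

lemma DV_ln_ne {i t : Fin 3} (h : t ≠ i) : ∃ c : ℝ, c ≠ 0 ∧ DV t (ln i) = C c := by
  have h1 : (1 : ℝ) ≠ 0 := one_ne_zero
  have h2 : (-1 : ℝ) ≠ 0 := by norm_num
  fin_cases i <;> fin_cases t <;> (try exact absurd rfl h)
  · exact ⟨1, h1, by simp [ln, dirZ]⟩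
  · exact ⟨1, h1, by simp [ln, dirZ]⟩
  · exact ⟨1, h1, by simp [ln, dirZ]⟩
  · exact ⟨1, h1, by simp [ln, dirZ]⟩
  · exact ⟨1, h1, by simp [ln, dirZ]⟩
  · exact ⟨-1, h2, by simp [ln, dirZ]⟩

lemma DV_pow_ln {i t : Fin 3} (k : ℕ) : DV t (ln i ^ k) = C (k : ℝ) * ln i ^ (k - 1) * DV t (ln i) := by
  rw [Derivation.leibniz_pow]
  simp [smul_eq_mul, mul_assoc]

lemma pow_dvd_step {i t : Fin 3} (h : t ≠ i) {q : BPoly} {m : ℕ} (h0 : ln i ∣ q)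
    (hd : ln i ^ m ∣ DV t q) : ln i ^ (m + 1) ∣ q := by
  obtain ⟨c, hc, hct⟩ := DV_ln_ne h
  have : ∀ k, k ≤ m → ln i ^ (k + 1) ∣ q := by
    intro k
    induction k with
    | zero => intro _; simpa using h0
    | succ k ih =>
      intro hk
      obtain ⟨r, hr⟩ := ih (by omega)
      have e : DV t q = ln i ^ k * (C (((k + 1 : ℕ) : ℝ) * c) * r + ln i * DV t r) := by
        rw [hr, DV_mul, DV_pow_ln, hct, C_mul]
        simp only [Nat.add_sub_cancel]
        ring
      have h1 : ln i ^ (k + 1) ∣ DV t q := (pow_dvd_pow _ hk).trans hd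
      rw [e, pow_succ, mul_dvd_mul_iff_left (pow_ne_zero _ (ln_ne i))] at h1
      have h2 : ln i ∣ C (((k + 1 : ℕ) : ℝ) * c) * r := (dvd_add_left (dvd_mul_right _ _)).1 h1
      have hu : (((k + 1 : ℕ) : ℝ) * c) ≠ 0 := by positivity
      have h3 : ln i ∣ r := by
        have := h2.mul_left (C ((((k + 1 : ℕ) : ℝ) * c)⁻¹))
        rwa [← mul_assoc, ← C_mul, inv_mul_cancel₀ hu, C_1, one_mul] at this
      rw [hr, pow_succ (ln i) (k + 1)]
      exact mul_dvd_mul_left _ h3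
  exact this m le_rfl

lemma dvd_DV_self {i : Fin 3} {q : BPoly} {m : ℕ} (h : ln i ^ m ∣ q) : ln i ^ m ∣ DV i q := by
  obtain ⟨r, rfl⟩ := h
  rw [DV_mul, DV_pow_ln, DV_ln_self]
  simp

lemma dvd_DV {i : Fin 3} (t : Fin 3) {q : BPoly} {m : ℕ} (h : ln i ^ m ∣ q) :
    ln i ^ (m - 1) ∣ DV t q := by
  obtain ⟨r, rfl⟩ := h
  rw [DV_mul, DV_pow_ln]
  refine dvd_add ?_ ?_
  · exact (pow_dvd_pow _ (by omega)).mul_right _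
  · exact ((dvd_mul_left _ _).mul_right _).mul_left _

/- ### Part 7: uniqueness of coefficients across an edge -/

/-- translation -/
def sh (w : ℤ × ℤ) : BPoly →ₐ[ℝ] BPoly := sb 0 0 w

@[simp] lemma evalP_sh (w : ℤ × ℤ) (q : BPoly) (p : Pt) :
    evalP (sh w q) p = evalP q (p.1 + w.1, p.2 + w.2) := by
  simp [sh]

lemma DV_sh (t : Fin 3) (w : ℤ × ℤ) (q : BPoly) : DV t (sh w q) = sh w (DV t q) := by
  simp [sh, DV_sb]

lemma sh_sh (v w : ℤ × ℤ) (q : BPoly) : sh v (sh w q) = sh (v + w) q := by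
  apply evalP_ext; intro p; simp [add_assoc]

lemma sh_zero (q : BPoly) : sh 0 q = q := by
  apply evalP_ext; intro p; simp

/-- evaluation as a linear map -/
def evL (p : Pt) : BPoly →ₗ[ℝ] ℝ := (MvPolynomial.aeval (![p.1, p.2] : Fin 2 → ℝ)).toLinearMap

lemma evL_eq (p : Pt) (q : BPoly) : evL p q = evalP q p := by
  simp [evL, evalP, MvPolynomial.aeval_eq_eval]

lemma evalP_FF (n : Fin 3 → ℕ) (τ : Bool) (a : ℤ × ℤ → ℝ) (p : Pt) :
    evalP (FF n τ a) p = ∑ᶠ u, a u * evalP (pp n u τ) p := by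
  have := (evL p).toAddMonoidHom.map_finsum (sm_supp n τ a)
  simp only [LinearMap.toAddMonoidHom_coe, map_smul, evL_eq, smul_eq_mul] at this
  exact this

/-- lower combination at an edge -/
def GLo (i : Fin 3) (n : Fin 3 → ℕ) (a : ℤ × ℤ → ℝ) : BPoly :=
  sh (lam i) (FF n false (fun u => a (u + lam i)))
/-- upper combination at an edge -/
def GU (i : Fin 3) (n : Fin 3 → ℕ) (a : ℤ × ℤ → ℝ) : BPoly :=
  sh (mu i) (FF n true (fun u => a (u + mu i)))

lemma DV_GLo {n : Fin 3 → ℕ} {s : Fin 3} (hs : 1 ≤ n s) (i : Fin 3) (a : ℤ × ℤ → ℝ) :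
    DV s (GLo i n a) = GLo i (dn s n) (fun u => a u - a (u + dirZ s)) := by
  rw [GLo, DV_sh, DV_FF hs, GLo]
  simp only [add_right_comm]
lemma DV_GU {n : Fin 3 → ℕ} {s : Fin 3} (hs : 1 ≤ n s) (i : Fin 3) (a : ℤ × ℤ → ℝ) :
    DV s (GU i n a) = GU i (dn s n) (fun u => a u - a (u + dirZ s)) := by
  rw [GU, DV_sh, DV_FF hs, GU]
  simp only [add_right_comm]

lemma GLo_add (i : Fin 3) (n : Fin 3 → ℕ) (a b : ℤ × ℤ → ℝ) :
    GLo i n (a + b) = GLo i n a + GLo i n b := by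
  rw [GLo, GLo, GLo, ← map_add, ← FF_add]; rfl
lemma GU_add (i : Fin 3) (n : Fin 3 → ℕ) (a b : ℤ × ℤ → ℝ) :
    GU i n (a + b) = GU i n a + GU i n b := by
  rw [GU, GU, GU, ← map_add, ← FF_add]; rfl

lemma G_vl {n : Fin 3 → ℕ} {i : Fin 3} (h : EC i (pp n)) (a : ℤ × ℤ → ℝ) :
    VL i (GLo i n a - GU i n a) := by
  intro z
  rw [evalP_sub, sub_eq_zero, GLo, GU, evalP_sh, evalP_sh, evalP_FF, evalP_FF]
  rw [← finsum_shift _ (lam i), ← finsum_shift (fun u => a (u + mu i) * _) (mu i)]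
  apply finsum_congr
  intro u
  simp only [sub_add_cancel]
  congr 1
  fin_cases i
  · simpa [lam, mu] using h u z
  · simpa [lam, mu] using (h u z).symm
  · simpa [lam, mu] using h u z

lemma G_dvd {i j k : Fin 3} (hij : i ≠ j) (hik : i ≠ k) (hjk : j ≠ k) (n : Fin 3 → ℕ) :
    ∀ a : ℤ × ℤ → ℝ, ln i ^ (n j + n k - 1) ∣ GLo i n a - GU i n a := by
  induction n using n_ind with | h n ih
  intro a
  by_cases h2 : 2 ≤ n j + n k
  · have h0 := ln_dvd (G_vl (EC_pp n i j k hij hik hjk h2) a)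
    have key : ∀ t, t ≠ i → 1 ≤ n t → dn t n j + dn t n k - 1 + 1 = n j + n k - 1 →
        ln i ^ (n j + n k - 1) ∣ GLo i n a - GU i n a := by
      intro t ht h1 he
      rw [← he]
      apply pow_dvd_step ht h0
      rw [map_sub, DV_GLo h1, DV_GU h1]
      exact ih t h1 _
    by_cases hj : 1 ≤ n j
    · exact key j hij.symm hj (by rw [dn_same, dn_ne hjk.symm]; omega)
    · exact key k hik.symm (by omega) (by rw [dn_same, dn_ne hjk]; omega)
  · rw [show n j + n k - 1 = 0 by omega]; simp

/-- both cells adjacent to the edge are in the support -/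
def Hc (i : Fin 3) (n : Fin 3 → ℕ) (u : ℤ × ℤ) : Prop :=
  HH n (u - lam i) false ∧ HH n (u - mu i) true

lemma Hc_iff (i : Fin 3) (n : Fin 3 → ℕ) (u : ℤ × ℤ) : Hc i n u ↔
    Rg (n 0) (n 1) (n 2) (![0, 1, 0] i) (![1, 0, 0] i) (![0, 1, 1] i) (![1, 0, 1] i) u.1 u.2 := by
  fin_cases i <;> simp [Hc, HH, Rg, lam, mu] <;> omega

lemma Hc_vd {i : Fin 3} {n : Fin 3 → ℕ} {u : ℤ × ℤ} (h : Hc i n u) : Vd n := by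
  rw [Hc_iff] at h
  fin_cases i <;> simp [Rg] at h <;> unfold Vd <;> omega

lemma Hc_two {i j k : Fin 3} (hij : i ≠ j) (hik : i ≠ k) (hjk : j ≠ k) {n : Fin 3 → ℕ} {u : ℤ × ℤ}
    (h : Hc i n u) : 2 ≤ n j + n k := by
  rw [Hc_iff] at h
  fin_cases i <;> fin_cases j <;> (try exact absurd rfl hij) <;> fin_cases k <;>
      (try exact absurd rfl hik) <;> (try exact absurd rfl hjk) <;> simp [Rg] at h ⊢ <;> omega

lemma Hc_const {i : Fin 3} {n : Fin 3 → ℕ} (hv : Vd n) (a : ℤ × ℤ → ℝ)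
    (h : ∀ s, 1 ≤ n s → ∀ u, Hc i (dn s n) u → a u - a (u + dirZ s) = 0) :
    ∀ u u', Hc i n u → Hc i n u' → a u = a u' := by
  have hI : i = 0 ∨ i = 1 ∨ i = 2 := by fin_cases i <;> simp
  have H := conn3 (n 0) (n 1) (n 2) (![0, 1, 0] i) (![1, 0, 0] i) (![0, 1, 1] i) (![1, 0, 1] i)
    (by positivity) (by positivity) (by positivity) (by unfold Vd at hv; omega)
    (by rcases hI with rfl | rfl | rfl <;> simp) (by rcases hI with rfl | rfl | rfl <;> simp)
    (by rcases hI with rfl | rfl | rfl <;> simp) (by rcases hI with rfl | rfl | rfl <;> simp)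
    (by rcases hI with rfl | rfl | rfl <;> simp) (by rcases hI with rfl | rfl | rfl <;> simp)
    (fun x y => a (x, y))
    (by
      intro h1 x y hR hR'
      have := h 0 (by omega) (x, y) (by
        rw [Hc_iff]
        simp [Rg, dn, Function.update_apply] at hR hR' ⊢
        omega)
      simpa [dirZ, sub_eq_zero] using this)
    (by
      intro h1 x y hR hR'
      have := h 1 (by omega) (x, y) (by
        rw [Hc_iff]
        simp [Rg, dn, Function.update_apply] at hR hR' ⊢
        omega)
      simpa [dirZ, sub_eq_zero] using this)
    (by
      intro h1 x y hR hR'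
      have := h 2 (by omega) (x, y) (by
        rw [Hc_iff]
        simp [Rg, dn, Function.update_apply] at hR hR' ⊢
        omega)
      simpa [dirZ, sub_eq_zero] using this)
  intro u u' hu hu'
  exact H u.1 u.2 u'.1 u'.2 ((Hc_iff i n u).1 hu) ((Hc_iff i n u').1 hu')

lemma ln_not_dvd_C {i : Fin 3} {κ : ℝ} (h : ln i ∣ C κ) : κ = 0 := by
  have := VL_of_dvd h 0
  simpa using this

open Classical in
lemma claimP {i j k : Fin 3} (hij : i ≠ j) (hik : i ≠ k) (hjk : j ≠ k) (n : Fin 3 → ℕ) :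
    ∀ a : ℤ × ℤ → ℝ, ln i ^ (n j + n k - 1) ∣ GLo i n a → ∀ u, Hc i n u → a u = 0 := by
  induction n using n_ind with | h n ih
  intro a hd u0 hu0
  have hv := Hc_vd hu0
  have h2 := Hc_two hij hik hjk hu0
  have hI : ∀ s, s = i ∨ s = j ∨ s = k := by
    intro s; revert hij hik hjk; clear * -; revert i j k s; decide
  have hcon : ∀ u, Hc i n u → a u = a u0 := by
    intro u hu
    refine Hc_const hv a ?_ u u0 hu hu0
    intro s hs
    refine ih s hs (fun u => a u - a (u + dirZ s)) ?_
    rw [← DV_GLo hs]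
    rcases hI s with rfl | rfl | rfl
    · rw [dn_ne hij.symm, dn_ne hik.symm]; exact dvd_DV_self hd
    · rw [dn_same, dn_ne hjk.symm, show n s - 1 + n k - 1 = n s + n k - 1 - 1 by omega]
      exact dvd_DV _ hd
    · rw [dn_same, dn_ne hjk, show n j + (n s - 1) - 1 = n j + n s - 1 - 1 by omega]
      exact dvd_DV _ hd
  set κ := a u0 with hκ
  set b1 : ℤ × ℤ → ℝ := fun u => if HH n (u - mu i) true then a u - κ else 0 with hb1
  set b2 : ℤ × ℤ → ℝ := fun u => if HH n (u - mu i) true then 0 else a u - κ with hb2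
  have e : a = (fun _ => κ) + (b1 + b2) := by
    funext u
    simp only [hb1, hb2, Pi.add_apply]
    split_ifs <;> ring
  have g1 : GLo i n b1 = 0 := by
    rw [GLo, FF_congr (b := fun _ => 0), FF]
    · simp
    · intro u hu
      simp only [hb1]
      split_ifs with h
      · rw [hcon (u + lam i) ⟨by simpa using hu, h⟩, sub_self]
      · rfl
  have g2 : GU i n b2 = 0 := by
    rw [GU, FF_congr (b := fun _ => 0), FF]
    · simp
    · intro u hu
      simp only [hb2]
      rw [if_pos (by simpa using hu)]
  have g3 : ln i ^ (n j + n k - 1) ∣ GLo i n b2 := by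
    have := G_dvd hij hik hjk n b2
    rwa [g2, sub_zero] at this
  have g4 : GLo i n (fun _ => κ) = C κ := by
    rw [GLo, FF_const hv]
    exact (sh (lam i)).commutes κ
  rw [e, GLo_add, GLo_add, g1, zero_add, g4] at hd
  have := (dvd_add_left g3).1 hd
  exact ln_not_dvd_C ((dvd_pow_self _ (by omega)).trans this)

/- ### Part 8: the span does not depend on the triangle -/

/-- recursive description of the span -/
inductive WW : (Fin 3 → ℕ) → BPoly → Prop
  | zero (n : Fin 3 → ℕ) (h : ¬ Vd n) : WW n 0
  | step (n : Fin 3 → ℕ) (q : BPoly) (h : Vd n) (hq : ∀ s, 1 ≤ n s → WW (dn s n) (DV s q)) : WW n q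

lemma WW_inv {n : Fin 3 → ℕ} {q : BPoly} (h : WW n q) (hn : ¬ Vd n) : q = 0 := by
  cases h with
  | zero _ h => rfl
  | step _ _ h hq => exact absurd h hn

lemma WW_step {n : Fin 3 → ℕ} {q : BPoly} (h : WW n q) (hn : Vd n) (s : Fin 3) (hs : 1 ≤ n s) :
    WW (dn s n) (DV s q) := by
  cases h with
  | zero _ h => exact absurd hn h
  | step _ _ h hq => exact hq s hs

lemma WW_FF (n : Fin 3 → ℕ) (τ : Bool) : ∀ a, WW n (FF n τ a) := by
  induction n using n_ind with | h n ih
  intro a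
  by_cases hn : Vd n
  · refine WW.step _ _ hn ?_
    intro s hs
    rw [DV_FF hs]
    exact ih s hs _
  · rw [FF_inv hn]
    exact WW.zero _ hn

lemma WW_sh (n : Fin 3 → ℕ) (w : ℤ × ℤ) : ∀ q, WW n q → WW n (sh w q) := by
  induction n using n_ind with | h n ih
  intro q hq
  by_cases hn : Vd n
  · refine WW.step _ _ hn ?_
    intro s hs
    rw [DV_sh]
    exact ih s hs _ (WW_step hq hn s hs)
  · rw [WW_inv hq hn, map_zero]
    exact WW.zero _ hn

lemma WW_sub (n : Fin 3 → ℕ) : ∀ q r, WW n q → WW n r → WW n (q - r) := by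
  induction n using n_ind with | h n ih
  intro q r hq hr
  by_cases hn : Vd n
  · refine WW.step _ _ hn ?_
    intro s hs
    rw [map_sub]
    exact ih s hs _ _ (WW_step hq hn s hs) (WW_step hr hn s hs)
  · rw [WW_inv hq hn, WW_inv hr hn, sub_zero]
    exact WW.zero _ hn

/-- discrete antiderivative -/
def dint (b : ℤ → ℝ) (x : ℤ) : ℝ := ∑ k ∈ Finset.Ico x 0, b k - ∑ k ∈ Finset.Ico 0 x, b k

lemma dint_spec (b : ℤ → ℝ) (x : ℤ) : dint b x - dint b (x + 1) = b x := by
  unfold dint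
  rcases le_or_gt 0 x with h | h
  · rw [Finset.Ico_eq_empty (a := x) (b := 0) (by omega),
      Finset.Ico_eq_empty (a := x + 1) (b := 0) (by omega)]
    have : Finset.Ico 0 (x + 1) = insert x (Finset.Ico 0 x) := by
      ext k; simp; omega
    rw [this, Finset.sum_insert (by simp)]
    simp
  · rw [Finset.Ico_eq_empty (a := 0) (b := x) (by omega),
      Finset.Ico_eq_empty (a := 0) (b := x + 1) (by omega)]
    have : Finset.Ico x 0 = insert x (Finset.Ico (x + 1) 0) := by
      ext k; simp; omega
    rw [this, Finset.sum_insert (by simp)]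
    simp

lemma exists_func {s t : Fin 3} (h : s ≠ t) : ∃ x : ℤ × ℤ → ℤ, (∀ u, x (u + dirZ s) = x u + 1) ∧
    ∀ u, x (u + dirZ t) = x u := by
  have key : ∃ p q : ℤ, p * (dirZ s).1 + q * (dirZ s).2 = 1 ∧ p * (dirZ t).1 + q * (dirZ t).2 = 0 := by
    fin_cases s <;> fin_cases t <;> first | exact absurd rfl h | skip
    · exact ⟨1, 0, rfl, rfl⟩
    · exact ⟨1, -1, rfl, rfl⟩
    · exact ⟨0, 1, rfl, rfl⟩
    · exact ⟨-1, 1, rfl, rfl⟩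
    · exact ⟨0, 1, rfl, rfl⟩
    · exact ⟨1, 0, rfl, rfl⟩
  obtain ⟨p, q, h1, h2⟩ := key
  refine ⟨fun u => p * u.1 + q * u.2, ?_, ?_⟩
  · intro u
    simp only [Prod.fst_add, Prod.snd_add]
    linear_combination h1
  · intro u
    simp only [Prod.fst_add, Prod.snd_add]
    linear_combination h2

lemma disc_int {s t : Fin 3} (h : s ≠ t) (b : ℤ × ℤ → ℝ) : ∃ a : ℤ × ℤ → ℝ,
    (∀ u, a u - a (u + dirZ s) = b u) ∧
    ((∀ u, b (u + dirZ t) = b u) → ∀ u, a (u + dirZ t) = a u) := by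
  obtain ⟨x, hs, ht⟩ := exists_func h
  refine ⟨fun u => dint (fun k => b (u + (k - x u) • dirZ s)) (x u), ?_, ?_⟩
  · intro u
    have e : (fun k : ℤ => b (u + dirZ s + (k - x (u + dirZ s)) • dirZ s)) =
        fun k => b (u + (k - x u) • dirZ s) := by
      ext k
      congr 1
      rw [hs]
      module
    beta_reduce
    rw [e, hs, dint_spec]
    simp
  · intro hb u
    have e : (fun k : ℤ => b (u + dirZ t + (k - x (u + dirZ t)) • dirZ s)) =
        fun k => b (u + (k - x u) • dirZ s) := by
      ext k
      rw [ht, ← hb (u + (k - x u) • dirZ s)]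
      congr 1
      module
    beta_reduce
    rw [e, ht]

lemma Vd_other {n : Fin 3 → ℕ} (hn : Vd n) (s : Fin 3) : ∃ t, t ≠ s ∧ 1 ≤ n t := by
  rcases hn with ⟨h, h'⟩ | ⟨h, h'⟩ | ⟨h, h'⟩ <;> fin_cases s <;>
    first
    | exact ⟨_, by decide, h⟩
    | exact ⟨_, by decide, h'⟩

lemma span_ker (n : Fin 3 → ℕ) (τ : Bool) (s : Fin 3) : 1 ≤ n s → ∀ q, WW n q → DV s q = 0 →
    ∃ a : ℤ × ℤ → ℝ, q = FF n τ a ∧ ∀ u, a (u + dirZ s) = a u := by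
  induction n using n_ind with | h n ih
  intro hs q hq hd
  by_cases hn : Vd n
  · obtain ⟨t, hts, ht⟩ := Vd_other hn s
    obtain ⟨b, hb, hb'⟩ := ih t ht (by rwa [dn_ne hts.symm]) _ (WW_step hq hn t ht)
      (by rw [DV_comm, hd, map_zero])
    obtain ⟨a, ha, ha'⟩ := disc_int hts b
    have e1 : DV t (q - FF n τ a) = 0 := by
      rw [map_sub, hb, DV_FF ht]
      simp only [ha, sub_self]
    have e2 : DV s (q - FF n τ a) = 0 := by
      rw [map_sub, hd, DV_FF hs]
      simp only [ha' hb', sub_self]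
      simp [FF]
    obtain ⟨κ, hκ⟩ := const_of_DV hts e1 e2
    refine ⟨a + fun _ => κ, ?_, ?_⟩
    · rw [FF_add, FF_const hn, ← hκ]; ring
    · intro u
      simp [ha' hb' u]
  · refine ⟨0, ?_, fun u => rfl⟩
    rw [WW_inv hq hn, FF_inv hn]

lemma span_WW (n : Fin 3 → ℕ) (τ : Bool) : ∀ q, WW n q → ∃ a : ℤ × ℤ → ℝ, q = FF n τ a := by
  induction n using n_ind with | h n ih
  intro q hq
  by_cases hn : Vd n
  · obtain ⟨s, -, hs⟩ := Vd_other hn 0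
    obtain ⟨t, hts, -⟩ := Vd_other hn s
    obtain ⟨b, hb⟩ := ih s hs _ (WW_step hq hn s hs)
    obtain ⟨a, ha, -⟩ := disc_int hts.symm b
    obtain ⟨a', ha', -⟩ := span_ker n τ s hs (q - FF n τ a) (WW_sub _ _ _ hq (WW_FF n τ a)) (by
      rw [map_sub, hb, DV_FF hs]
      simp only [ha, sub_self])
    refine ⟨a + a', ?_⟩
    rw [FF_add, ← ha']; ring
  · refine ⟨0, ?_⟩
    rw [WW_inv hq hn, FF_inv hn]

/- ### Part 9: smoothness and divisibility -/

lemma hasDerivAt_maxpow (m : ℕ) (x : ℝ) :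
    HasDerivAt (fun x : ℝ => (max x 0) ^ (m + 2)) ((m + 2 : ℝ) * (max x 0) ^ (m + 1)) x := by
  have hr : ∀ y : ℝ, 0 ≤ y → max y 0 = y := fun y hy => max_eq_left hy
  have hl : ∀ y : ℝ, y ≤ 0 → max y 0 = 0 := fun y hy => max_eq_right hy
  have hp : HasDerivAt (fun x : ℝ => x ^ (m + 2)) ((m + 2 : ℝ) * x ^ (m + 1)) x := by
    have := hasDerivAt_pow (m + 2) x
    simpa using this
  rcases lt_trichotomy x 0 with h | h | h
  · rw [hl x h.le]
    have : HasDerivAt (fun _ : ℝ => (0 : ℝ)) 0 x := hasDerivAt_const x 0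
    simp only [ne_eq, Nat.add_eq_zero_iff, one_ne_zero, and_false, not_false_eq_true, zero_pow, mul_zero]
    apply this.congr_of_eventuallyEq
    filter_upwards [Iio_mem_nhds h] with y hy
    rw [hl y (le_of_lt hy)]
    simp
  · subst h
    rw [← hasDerivWithinAt_univ, ← Iic_union_Ici (a := (0 : ℝ))]
    apply HasDerivWithinAt.union
    · have : HasDerivWithinAt (fun _ : ℝ => (0 : ℝ)) 0 (Iic 0) 0 := hasDerivWithinAt_const _ _ _
      simp only [max_self, ne_eq, Nat.add_eq_zero_iff, one_ne_zero, and_false, not_false_eq_true,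
        zero_pow, mul_zero]
      apply this.congr
      · intro y hy
        rw [hl y hy]; simp
      · simp
    · rw [max_self]
      apply hp.hasDerivWithinAt.congr
      · intro y hy
        rw [hr y hy]
      · simp
  · rw [hr x h.le]
    apply hp.congr_of_eventuallyEq
    filter_upwards [Ioi_mem_nhds h] with y hy
    rw [hr y (le_of_lt hy)]

lemma contDiff_maxpow (d : ℕ) : ContDiff ℝ d (fun x : ℝ => (max x 0) ^ (d + 1)) := by
  induction d with
  | zero =>
    simp only [Nat.cast_zero, contDiff_zero]
    fun_prop
  | succ d ih =>
    have e : ((d + 1 : ℕ) : WithTop ℕ∞) = (d : WithTop ℕ∞) + 1 := by push_cast; rfl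
    rw [e, contDiff_succ_iff_deriv]
    refine ⟨fun x => (hasDerivAt_maxpow d x).differentiableAt, by simp, ?_⟩
    have : deriv (fun x : ℝ => (max x 0) ^ (d + 1 + 1)) =
        fun x => (d + 2 : ℝ) * (max x 0) ^ (d + 1) := by
      ext x; exact (hasDerivAt_maxpow d x).deriv
    rw [this]
    exact contDiff_const.mul ih

lemma glue {d : ℕ} {f f' l : BPoly} (h : l ^ (d + 1) ∣ f - f') : ∃ g : Pt → ℝ, ContDiff ℝ d g ∧
    (∀ p, 0 ≤ evalP l p → g p = evalP f p) ∧ (∀ p, evalP l p ≤ 0 → g p = evalP f' p) := by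
  obtain ⟨r, hr⟩ := h
  have hr' : f = f' + l ^ (d + 1) * r := by rw [← hr]; ring
  refine ⟨fun p => evalP f' p + (max (evalP l p) 0) ^ (d + 1) * evalP r p, ?_, ?_, ?_⟩
  · exact (contDiff_evalP f').add (((contDiff_maxpow d).comp (contDiff_evalP l)).mul (contDiff_evalP r))
  · intro p hp
    beta_reduce
    rw [max_eq_left hp, hr']
    simp
  · intro p hp
    beta_reduce
    rw [max_eq_right hp]
    simp

/-- points of the edge line -/
def lpt (i : Fin 3) (z : ℝ) : Pt := ![(z, 0), (0, z), (z, z)] i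
/-- transversal direction -/
def tw (i : Fin 3) : Pt := ![(0, 1), (1, 0), (1, 0)] i

lemma ln_tw (i : Fin 3) (z x : ℝ) : evalP (ln i) (lpt i z + x • tw i) = x := by
  fin_cases i <;> simp [ln, lpt, tw]

lemma tw_tendsto (i : Fin 3) (z σ : ℝ) :
    Filter.Tendsto (fun x : ℝ => lpt i z + (σ * x) • tw i) (nhdsWithin 0 (Ioi 0)) (nhds (lpt i z)) := by
  have : Continuous (fun x : ℝ => lpt i z + (σ * x) • tw i) := by fun_prop
  have h := this.tendsto 0
  simp only [mul_zero, zero_smul, add_zero] at h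
  exact h.mono_left nhdsWithin_le_nhds

lemma lim_evalP {O : Set Pt} (hO : IsOpen O) {h : Pt → ℝ} (hh : ContinuousOn h O) {i : Fin 3} {q : BPoly}
    {σ : ℝ} (hσ : σ ≠ 0) (he : ∀ p ∈ O, 0 < σ * evalP (ln i) p → h p = evalP q p) {z : ℝ}
    (hz : lpt i z ∈ O) : h (lpt i z) = evalP q (lpt i z) := by
  have t := tw_tendsto i z σ
  have hc : ContinuousAt h (lpt i z) := hh.continuousAt (hO.mem_nhds hz)
  have t1 := hc.tendsto.comp t
  have t2 := ((continuous_evalP q).tendsto (lpt i z)).comp t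
  refine tendsto_nhds_unique t1 (t2.congr' ?_)
  filter_upwards [t.eventually (hO.mem_nhds hz), self_mem_nhdsWithin] with x hx hx0
  refine (he _ hx ?_).symm
  rw [ln_tw, ← mul_assoc]
  have : (0 : ℝ) < x := hx0
  exact mul_pos (mul_self_pos.mpr hσ) this

lemma VL_of_seg {i : Fin 3} {q : BPoly} (h : ∀ z, 0 < z → z < 1 → evalP q (lpt i z) = 0) : ln i ∣ q := by
  have h0 : rd i q = 0 := by
    apply evalP_ext_box (a := 0) (b := 1) (c := 0) (d := 1) one_pos one_pos
    intro x y hx hx' hy hy'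
    rw [rd]
    fin_cases i
    · have := h x hx hx'
      show evalP (aeval ![X 0, 0] q) _ = evalP 0 _
      rw [evalP_aeval]; simpa [lpt] using this
    · have := h y hy hy'
      show evalP (aeval ![0, X 1] q) _ = evalP 0 _
      rw [evalP_aeval]; simpa [lpt] using this
    · have := h y hy hy'
      show evalP (aeval ![X 1, X 1] q) _ = evalP 0 _
      rw [evalP_aeval]; simpa [lpt] using this
  simpa [h0] using dvd_sub_rd i q

lemma dvd_of_smooth {O : Set Pt} (hO : IsOpen O) {i : Fin 3} (hi : ∀ z, 0 < z → z < 1 → lpt i z ∈ O)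
    {σ : ℝ} (hσ : σ ≠ 0) (d : ℕ) : ∀ (h : Pt → ℝ) (q : BPoly), ContDiffOn ℝ d h O →
    (∀ p ∈ O, 0 < σ * evalP (ln i) p → h p = evalP q p) →
    (∀ p ∈ O, σ * evalP (ln i) p < 0 → h p = 0) → ln i ^ (d + 1) ∣ q := by
  induction d with
  | zero =>
    intro h q hd h1 h2
    rw [zero_add, pow_one]
    apply VL_of_seg
    intro z hz hz'
    have a := lim_evalP hO hd.continuousOn hσ h1 (hi z hz hz')
    have b := lim_evalP hO hd.continuousOn (i := i) (q := 0) (neg_ne_zero.mpr hσ) (fun p hp hp' => by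
      rw [h2 p hp (by linarith)]; simp) (hi z hz hz')
    rw [← a, b]; simp
  | succ d ih =>
    intro h q hd h1 h2
    have e : ((d + 1 : ℕ) : WithTop ℕ∞) = (d : WithTop ℕ∞) + 1 := by push_cast; rfl
    obtain ⟨t, ht⟩ : ∃ t : Fin 3, t ≠ i := exists_ne i
    have hb : ln i ∣ q := by
      apply VL_of_seg
      intro z hz hz'
      have a := lim_evalP hO hd.continuousOn hσ h1 (hi z hz hz')
      have b := lim_evalP hO hd.continuousOn (i := i) (q := 0) (neg_ne_zero.mpr hσ) (fun p hp hp' => by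
        rw [h2 p hp (by linarith)]; simp) (hi z hz hz')
      rw [← a, b]; simp
    rw [e, contDiffOn_succ_iff_fderiv_of_isOpen hO] at hd
    have hcont : Continuous fun p => σ * evalP (ln i) p := continuous_const.mul (continuous_evalP _)
    refine pow_dvd_step ht hb (ih (fun p => fderiv ℝ h p (er t)) (DV t q) ?_ ?_ ?_)
    · exact hd.2.2.clm_apply contDiffOn_const
    · intro p hp hp'
      have : h =ᶠ[nhds p] evalP q := by
        filter_upwards [hO.mem_nhds hp, (isOpen_lt continuous_const hcont).mem_nhds hp'] with x hx hx'
        exact h1 x hx hx'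
      beta_reduce
      rw [this.fderiv_eq, fderiv_evalP]
    · intro p hp hp'
      have : h =ᶠ[nhds p] fun _ => 0 := by
        filter_upwards [hO.mem_nhds hp, (isOpen_lt hcont continuous_const).mem_nhds hp'] with x hx hx'
        exact h2 x hx hx'
      beta_reduce
      rw [this.fderiv_eq]
      simp

/-- open parallelogram around an edge -/
def OO (i : Fin 3) : Set Pt :=
  ![{p | 0 < p.1 ∧ p.1 < 1 ∧ p.1 - 1 < p.2 ∧ p.2 < p.1}, {p | 0 < p.2 ∧ p.2 < 1 ∧ p.2 - 1 < p.1 ∧ p.1 < p.2},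
    {p | 0 < p.1 ∧ p.1 < 1 ∧ 0 < p.2 ∧ p.2 < 1}] i

/-- orientation -/
def sg (i : Fin 3) : ℝ := ![1, -1, 1] i

lemma sg_ne (i : Fin 3) : sg i ≠ 0 := by fin_cases i <;> simp [sg]

lemma OO_open (i : Fin 3) : IsOpen (OO i) := by
  fin_cases i <;>
  · simp only [OO, Matrix.cons_val, Fin.zero_eta, Fin.mk_one, Fin.reduceFinMk]
    refine IsOpen.and ?_ (IsOpen.and ?_ (IsOpen.and ?_ ?_)) <;>
      exact isOpen_lt (by fun_prop) (by fun_prop)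

lemma lp_OO (i : Fin 3) (z : ℝ) (h : 0 < z) (h' : z < 1) : lpt i z ∈ OO i := by
  fin_cases i <;> simp [OO, lpt, h, h']

/-- the lower triangle at an edge -/
def loT (ε : Edge) : Tri := ⟨ε.1 - lam ε.2, false⟩
/-- the upper triangle at an edge -/
def upT (ε : Edge) : Tri := ⟨ε.1 - mu ε.2, true⟩

/-- the point relative to the base of an edge -/
def rel (v : ℤ × ℤ) (p : Pt) : Pt := (p.1 - v.1, p.2 - v.2)

lemma loT_iff (v : ℤ × ℤ) (i : Fin 3) (p : Pt) :
    p ∈ (loT (v, i)).toSet → 0 < sg i * evalP (ln i) (rel v p) := by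
  fin_cases i <;> simp [loT, Tri.toSet, sg, ln, rel, lam] <;> intros <;> linarith

lemma upT_iff (v : ℤ × ℤ) (i : Fin 3) (p : Pt) :
    p ∈ (upT (v, i)).toSet → sg i * evalP (ln i) (rel v p) < 0 := by
  fin_cases i <;> simp [upT, Tri.toSet, sg, ln, rel, mu] <;> intros <;> linarith

lemma OO_lo (v : ℤ × ℤ) (i : Fin 3) (p : Pt) (h : rel v p ∈ OO i)
    (h' : 0 < sg i * evalP (ln i) (rel v p)) : p ∈ (loT (v, i)).toSet := by
  fin_cases i <;> simp [loT, Tri.toSet, sg, ln, rel, lam, OO] at * <;> refine ⟨?_, ?_, ?_⟩ <;> linarith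

lemma OO_up (v : ℤ × ℤ) (i : Fin 3) (p : Pt) (h : rel v p ∈ OO i)
    (h' : sg i * evalP (ln i) (rel v p) < 0) : p ∈ (upT (v, i)).toSet := by
  fin_cases i <;> simp [upT, Tri.toSet, sg, ln, rel, mu, OO] at * <;> refine ⟨?_, ?_, ?_⟩ <;> linarith

lemma ln_zero_lp (i : Fin 3) (p : Pt) (h : evalP (ln i) p = 0) : ∃ z, p = lpt i z := by
  obtain ⟨x, y⟩ := p
  fin_cases i <;> simp [ln, lpt] at * <;> linarith

lemma OO_cl (v : ℤ × ℤ) (i : Fin 3) (p : Pt) (h : rel v p ∈ OO i) :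
    p ∈ (loT (v, i)).cl ∪ (upT (v, i)).cl := by
  rcases lt_trichotomy (sg i * evalP (ln i) (rel v p)) 0 with h' | h' | h'
  · exact Or.inr (subset_closure (OO_up v i p h h'))
  · left
    have h0 : evalP (ln i) (rel v p) = 0 := by
      rcases mul_eq_zero.mp h' with h' | h'
      · exact absurd h' (sg_ne i)
      · exact h'
    obtain ⟨z, hz⟩ := ln_zero_lp i _ h0
    have t := tw_tendsto i z (sg i)
    have t' : Filter.Tendsto (fun x : ℝ => (((v.1 : ℝ), (v.2 : ℝ)) : Pt) + (lpt i z + (sg i * x) • tw i))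
        (nhdsWithin 0 (Ioi 0)) (nhds p) := by
      have : p = (((v.1 : ℝ), (v.2 : ℝ)) : Pt) + lpt i z := by
        rw [← hz]; simp [rel]
      rw [this]
      exact t.const_add _
    refine mem_closure_of_tendsto t' ?_
    rw [hz] at h
    filter_upwards [t.eventually ((OO_open i).mem_nhds h), self_mem_nhdsWithin] with x hx hx0
    have hx0' : (0 : ℝ) < x := hx0
    have er : rel v ((((v.1 : ℝ), (v.2 : ℝ)) : Pt) + (lpt i z + (sg i * x) • tw i)) =
        lpt i z + (sg i * x) • tw i := by
      ext <;> simp [rel]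
    refine OO_lo v i _ (by rw [er]; exact hx) ?_
    rw [er, ln_tw, ← mul_assoc]
    exact mul_pos (mul_self_pos.mpr (sg_ne i)) hx0'
  · exact Or.inl (subset_closure (OO_lo v i p h h'))

lemma smooth_dvd {v : ℤ × ℤ} {i : Fin 3} {d : ℕ} {f f' : BPoly} {g : Pt → ℝ}
    (hg : ContDiffOn ℝ d g ((loT (v, i)).cl ∪ (upT (v, i)).cl))
    (h : EqOn g (evalP f) (loT (v, i)).toSet) (h' : EqOn g (evalP f') (upT (v, i)).toSet) :
    ln i ^ (d + 1) ∣ sh v (f - f') := by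
  have hrel : ∀ p : Pt, rel v (p.1 + v.1, p.2 + v.2) = p := by intro p; simp [rel]
  refine dvd_of_smooth (OO_open i) (lp_OO i) (sg_ne i) d
    (fun p => g (p.1 + v.1, p.2 + v.2) - evalP f' (p.1 + v.1, p.2 + v.2)) _ ?_ ?_ ?_
  · refine ContDiffOn.sub ?_ ?_
    · refine hg.comp (f := fun p : Pt => (p.1 + (v.1 : ℝ), p.2 + (v.2 : ℝ))) ?_ ?_
      · exact ContDiff.contDiffOn (by fun_prop)
      · intro p hp
        apply OO_cl
        rw [hrel]; exact hp
    · exact (ContDiff.comp (contDiff_evalP f')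
        (f := fun p : Pt => (p.1 + (v.1 : ℝ), p.2 + (v.2 : ℝ))) (by fun_prop)).contDiffOn
  · intro p hp hp'
    beta_reduce
    rw [h (OO_lo v i _ (by rw [hrel]; exact hp) (by rw [hrel]; exact hp'))]
    simp
  · intro p hp hp'
    beta_reduce
    rw [h' (OO_up v i _ (by rw [hrel]; exact hp) (by rw [hrel]; exact hp'))]
    simp

lemma dvd_glue {v : ℤ × ℤ} {i : Fin 3} {d : ℕ} {f f' : BPoly}
    (h : ln i ^ (d + 1) ∣ sh v (f - f')) : ∃ g : Pt → ℝ, ContDiff ℝ d g ∧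
    EqOn g (evalP f) (loT (v, i)).cl ∧ EqOn g (evalP f') (upT (v, i)).cl := by
  have h1 : (sh (-v) (C (sg i) * ln i)) ^ (d + 1) ∣ f - f' := by
    rw [← map_pow, mul_pow, map_mul]
    obtain ⟨r, hr⟩ := h
    have e : f - f' = sh (-v) (ln i ^ (d + 1) * r) := by
      rw [← hr, sh_sh, neg_add_cancel, sh_zero]
    rw [e, map_mul]
    have hu : IsUnit (sh (-v) (C (sg i) ^ (d + 1))) := by
      apply IsUnit.map
      apply IsUnit.pow
      apply IsUnit.map
      exact isUnit_iff_ne_zero.mpr (sg_ne i)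
    rw [hu.mul_left_dvd]
    exact dvd_mul_right _ _
  have ev : ∀ p, evalP (sh (-v) (C (sg i) * ln i)) p = sg i * evalP (ln i) (rel v p) := by
    intro p
    simp [rel, sub_eq_add_neg]
  obtain ⟨g, hg, hg1, hg2⟩ := glue h1
  have hcont : Continuous (evalP (sh (-v) (C (sg i) * ln i))) := continuous_evalP _
  refine ⟨g, hg, fun p hp => hg1 p ?_, fun p hp => hg2 p ?_⟩
  · have : (loT (v, i)).cl ⊆ {p | 0 ≤ evalP (sh (-v) (C (sg i) * ln i)) p} := by
      apply closure_minimal _ (isClosed_le continuous_const hcont)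
      intro p hp
      rw [mem_ofPred_eq]
      rw [ev]; exact (loT_iff v i p hp).le
    exact this hp
  · have : (upT (v, i)).cl ⊆ {p | evalP (sh (-v) (C (sg i) * ln i)) p ≤ 0} := by
      apply closure_minimal _ (isClosed_le hcont continuous_const)
      intro p hp
      rw [mem_ofPred_eq]
      rw [ev]; exact (upT_iff v i p hp).le
    exact this hp

/- ### Part 10: assembly -/

lemma tri_ext (T : Tri) {q r : BPoly} (h : ∀ p ∈ T.toSet, evalP q p = evalP r p) : q = r := by
  obtain ⟨⟨a, b⟩, τ⟩ := T
  cases τ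
  · apply evalP_ext_box (a := a + 1 / 2) (b := a + 1) (c := b) (d := b + 1 / 2) (by linarith) (by linarith)
    intro x y h1 h2 h3 h4
    apply h
    simp only [Tri.toSet, Bool.false_eq_true, if_false]
    exact ⟨h3, by show y - b < x - a; linarith, h2⟩
  · apply evalP_ext_box (a := a) (b := a + 1 / 2) (c := b + 1 / 2) (d := b + 1) (by linarith) (by linarith)
    intro x y h1 h2 h3 h4
    apply h
    simp only [Tri.toSet, if_true]
    exact ⟨h1, by show x - a < y - b; linarith, h4⟩

section asm
variable {n₁ n₂ n₃ : ℕ}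

lemma trBox_eq (h₁ : 1 ≤ n₁) (h₂ : 1 ≤ n₂) (h₃ : 1 ≤ n₃) (T : Tri) (w : ℤ × ℤ) (p : Pt) (hp : p ∈ T.toSet) :
    trBox n₁ n₂ n₃ w p = evalP (pp ![n₁, n₂, n₃] (T.v - w) T.up) (rel T.v p) := by
  obtain ⟨a, rfl⟩ := Nat.exists_eq_add_of_le' h₁
  obtain ⟨b, rfl⟩ := Nat.exists_eq_add_of_le' h₂
  obtain ⟨c, rfl⟩ := Nat.exists_eq_add_of_le' h₃
  rw [trBox, HasPieces_box a b c (T.v - w) T.up]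
  · congr 1
    ext <;> simp [rel]
  · obtain ⟨⟨x, y⟩, τ⟩ := T
    cases τ <;> simp [Tri.toSet] at hp ⊢ <;> refine ⟨?_, ?_, ?_⟩ <;> linarith

lemma active_iff (h₁ : 1 ≤ n₁) (h₂ : 1 ≤ n₂) (h₃ : 1 ≤ n₃) (T : Tri) (w : ℤ × ℤ) :
    w ∈ activeSet n₁ n₂ n₃ T ↔ pp ![n₁, n₂, n₃] (T.v - w) T.up ≠ 0 := by
  apply not_congr
  constructor
  · intro h
    have : sh (-T.v) (pp ![n₁, n₂, n₃] (T.v - w) T.up) = 0 := by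
      apply tri_ext T
      intro p hp
      have := h p hp
      rw [trBox_eq h₁ h₂ h₃ T w p hp] at this
      simpa [rel, sub_eq_add_neg] using this
    have e := congrArg (sh T.v) this
    rwa [sh_sh, add_neg_cancel, sh_zero, map_zero] at e
  · intro h p hp
    rw [trBox_eq h₁ h₂ h₃ T w p hp, h]
    simp

lemma evalP_FF' (n : Fin 3 → ℕ) (τ : Bool) (u : ℤ × ℤ) (c : (ℤ × ℤ) →₀ ℝ) (p : Pt) :
    evalP (FF n τ (fun x => c (u - x))) p = c.sum fun w a => a * evalP (pp n (u - w) τ) p := by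
  rw [evalP_FF]
  have := finsum_comp_equiv (f := fun w => c w * evalP (pp n (u - w) τ) p) (Equiv.subLeft u)
  simp only [Equiv.subLeft_apply, sub_sub_cancel] at this
  rw [this, finsum_eq_sum_of_support_subset (s := c.support)]
  · rfl
  · intro w hw
    simp only [mem_support] at hw
    simp only [Finset.mem_coe, Finsupp.mem_support_iff]
    exact left_ne_zero_of_mul hw

lemma rep_poly (h₁ : 1 ≤ n₁) (h₂ : 1 ≤ n₂) (h₃ : 1 ≤ n₃) {T : Tri} {f : BPoly} {c : (ℤ × ℤ) →₀ ℝ}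
    (h : Represents n₁ n₂ n₃ T f c) :
    sh T.v f = FF ![n₁, n₂, n₃] T.up (fun x => c (T.v - x)) := by
  have : f = sh (-T.v) (FF ![n₁, n₂, n₃] T.up (fun x => c (T.v - x))) := by
    apply tri_ext T
    intro p hp
    rw [h.2 p hp, evalP_sh, evalP_FF']
    apply Finsupp.sum_congr
    intro w hw
    rw [trBox_eq h₁ h₂ h₃ T w p hp]
    simp [rel, sub_eq_add_neg]
  rw [this, sh_sh, add_neg_cancel, sh_zero]

lemma mem_V (h₁ : 1 ≤ n₁) (h₂ : 1 ≤ n₂) (h₃ : 1 ≤ n₃) {T : Tri} {f : BPoly} {a : ℤ × ℤ → ℝ}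
    (h : sh T.v f = FF ![n₁, n₂, n₃] T.up a) : f ∈ VSpace n₁ n₂ n₃ T := by
  classical
  have hfin : (support fun w => if w ∈ activeSet n₁ n₂ n₃ T then a (T.v - w) else 0).Finite := by
    have hf := (pp_supp ![n₁, n₂, n₃] T.up).preimage
      (f := fun w => T.v - w) (sub_right_injective.injOn)
    apply hf.subset
    intro w hw
    simp only [mem_support] at hw
    have : w ∈ activeSet n₁ n₂ n₃ T := by
      by_contra h'
      simp [h'] at hw
    exact (active_iff h₁ h₂ h₃ T w).mp this
  set c : (ℤ × ℤ) →₀ ℝ := Finsupp.ofSupportFinite _ hfin with hc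
  have hcw : ∀ w, c w = if w ∈ activeSet n₁ n₂ n₃ T then a (T.v - w) else 0 := fun w => rfl
  refine ⟨c, ?_, ?_⟩
  · intro w hw
    by_contra h'
    simp [hcw, h'] at hw
  · intro p hp
    have e : FF ![n₁, n₂, n₃] T.up a = FF ![n₁, n₂, n₃] T.up (fun x => c (T.v - x)) := by
      apply finsum_congr
      intro x
      by_cases hx : pp ![n₁, n₂, n₃] x T.up = 0
      · simp [hx]
      · have : T.v - x ∈ activeSet n₁ n₂ n₃ T := by
          rw [active_iff h₁ h₂ h₃]
          simpa using hx
        simp [hcw, this]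
    have e2 : evalP f p = evalP (sh T.v f) (rel T.v p) := by simp [rel]
    rw [e2, h, e, evalP_FF']
    apply Finsupp.sum_congr
    intro w hw
    rw [trBox_eq h₁ h₂ h₃ T w p hp]

lemma V_indep (h₁ : 1 ≤ n₁) (h₂ : 1 ≤ n₂) (h₃ : 1 ≤ n₃) {T T' : Tri} {f : BPoly} {c : (ℤ × ℤ) →₀ ℝ}
    (h : Represents n₁ n₂ n₃ T' f c) : f ∈ VSpace n₁ n₂ n₃ T := by
  have e := rep_poly h₁ h₂ h₃ h
  have hw : WW ![n₁, n₂, n₃] (sh T'.v f) := by rw [e]; exact WW_FF _ _ _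
  have hw2 := WW_sh _ (T.v - T'.v) _ hw
  rw [sh_sh, sub_add_cancel] at hw2
  obtain ⟨a, ha⟩ := span_WW _ T.up _ hw2
  exact mem_V h₁ h₂ h₃ ha

lemma rep_lo (h₁ : 1 ≤ n₁) (h₂ : 1 ≤ n₂) (h₃ : 1 ≤ n₃) {v : ℤ × ℤ} {i : Fin 3} {f : BPoly}
    {c : (ℤ × ℤ) →₀ ℝ} (h : Represents n₁ n₂ n₃ (loT (v, i)) f c) :
    sh v f = GLo i ![n₁, n₂, n₃] (fun u => c (v - u)) := by
  have e := congrArg (sh (lam i)) (rep_poly h₁ h₂ h₃ h)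
  rw [sh_sh] at e
  simp only [loT, add_sub_cancel] at e
  rw [e, GLo]
  simp only [sub_add_eq_sub_sub_swap]

lemma rep_up (h₁ : 1 ≤ n₁) (h₂ : 1 ≤ n₂) (h₃ : 1 ≤ n₃) {v : ℤ × ℤ} {i : Fin 3} {f : BPoly}
    {c : (ℤ × ℤ) →₀ ℝ} (h : Represents n₁ n₂ n₃ (upT (v, i)) f c) :
    sh v f = GU i ![n₁, n₂, n₃] (fun u => c (v - u)) := by
  have e := congrArg (sh (mu i)) (rep_poly h₁ h₂ h₃ h)
  rw [sh_sh] at e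
  simp only [upT, add_sub_cancel] at e
  rw [e, GU]
  simp only [sub_add_eq_sub_sub_swap]

lemma FF_congr' {n : Fin 3 → ℕ} {τ : Bool} {a b : ℤ × ℤ → ℝ} (h : ∀ u, pp n u τ ≠ 0 → a u = b u) :
    FF n τ a = FF n τ b := by
  apply finsum_congr
  intro u
  by_cases hu : pp n u τ = 0
  · simp [hu]
  · rw [h u hu]

lemma core (h₁ : 1 ≤ n₁) (h₂ : 1 ≤ n₂) (h₃ : 1 ≤ n₃) {v : ℤ × ℤ} {i j k : Fin 3}
    (hij : i ≠ j) (hik : i ≠ k) (hjk : j ≠ k) {f f' : BPoly}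
    {c c' : (ℤ × ℤ) →₀ ℝ} (h : Represents n₁ n₂ n₃ (loT (v, i)) f c)
    (h' : Represents n₁ n₂ n₃ (upT (v, i)) f' c') :
    ln i ^ (![n₁, n₂, n₃] j + ![n₁, n₂, n₃] k - 1) ∣ sh v (f - f') ↔
    ∀ w ∈ activeSet n₁ n₂ n₃ (loT (v, i)) ∩ activeSet n₁ n₂ n₃ (upT (v, i)), c w = c' w := by
  classical
  set n : Fin 3 → ℕ := ![n₁, n₂, n₃] with hn
  set D : ℤ × ℤ → ℝ := fun u => if v - u ∈ activeSet n₁ n₂ n₃ (loT (v, i)) then c (v - u) else c' (v - u)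
    with hD
  have e1 : sh v f = GLo i n D := by
    rw [rep_lo h₁ h₂ h₃ h, GLo, GLo]
    congr 1
    apply FF_congr'
    intro u hu
    have : v - (u + lam i) ∈ activeSet n₁ n₂ n₃ (loT (v, i)) := by
      rw [active_iff h₁ h₂ h₃]
      simp only [loT]
      convert hu using 2
      abel
    simp only [hD, this, if_true]
  have e2 := rep_up h₁ h₂ h₃ h'
  have hG := G_dvd hij hik hjk n
  rw [map_sub]
  constructor
  · intro hd w hw
    set E : ℤ × ℤ → ℝ := fun u => D u - c' (v - u) with hE
    have e3 : GU i n D = GU i n E + GU i n (fun u => c' (v - u)) := by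
      rw [← GU_add]
      congr 1
      ext u
      simp [hE]
    have d1 : ln i ^ (n j + n k - 1) ∣ GLo i n E := by
      have : GLo i n E = (sh v f - sh v f') - (GLo i n D - GU i n D) + (GLo i n E - GU i n E) := by
        rw [e1, e2, e3]; ring
      rw [this]
      exact dvd_add (dvd_sub hd (hG D)) (hG E)
    have hz := claimP hij hik hjk n E d1 (v - w) (by
      have a1 := HH_pp _ _ _ ((active_iff h₁ h₂ h₃ _ _).mp hw.1)
      have a2 := HH_pp _ _ _ ((active_iff h₁ h₂ h₃ _ _).mp hw.2)
      simp only [loT, upT] at a1 a2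
      refine ⟨?_, ?_⟩
      · rw [sub_right_comm]; exact a1
      · rw [sub_right_comm]; exact a2)
    have hw1 := hw.1
    simp only [hE, hD, sub_sub_cancel, hw1, if_true] at hz
    linarith
  · intro hcw
    have e3 : sh v f' = GU i n D := by
      rw [e2, GU, GU]
      congr 1
      apply FF_congr'
      intro u hu
      have : v - (u + mu i) ∈ activeSet n₁ n₂ n₃ (upT (v, i)) := by
        rw [active_iff h₁ h₂ h₃]
        simp only [upT]
        convert hu using 2
        abel
      simp only [hD]
      split_ifs with h0
      · exact (hcw _ ⟨h0, this⟩).symm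
      · rfl
    rw [e1, e3]
    exact hG D

lemma edges_iff (T : Tri) (ε : Edge) : ε ∈ T.edges ↔ T = loT ε ∨ T = upT ε := by
  obtain ⟨⟨a, b⟩, τ⟩ := T
  obtain ⟨⟨x, y⟩, i⟩ := ε
  fin_cases i <;> cases τ <;> simp [Tri.edges, loT, upT, lam, mu] <;> omega

lemma edge_unique {ε ε' : Edge} (h : ε' ∈ (loT ε).edges) (h' : ε' ∈ (upT ε).edges) : ε' = ε := by
  obtain ⟨⟨a, b⟩, j⟩ := ε'
  obtain ⟨⟨x, y⟩, i⟩ := ε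
  fin_cases i <;> simp [Tri.edges, loT, upT, lam, mu] at h h' ⊢ <;>
    rcases h with h | h | h <;> rcases h' with h' | h' | h' <;>
    simp [h.2] at h' ⊢ <;> omega

lemma diamond_pair (T T' : Tri) (ε : Edge) (h : ε ∈ T.edges) (h' : ε ∈ T'.edges) :
    diamond {T, T'} ε = T.cl ∪ T'.cl := by
  ext p
  simp [diamond, h, h', or_and_right, exists_or]

lemma edgecase (h₁ : 1 ≤ n₁) (h₂ : 1 ≤ n₂) (h₃ : 1 ≤ n₃) {v : ℤ × ℤ} {i : Fin 3} {f f' : BPoly}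
    {c c' : (ℤ × ℤ) →₀ ℝ} (h : Represents n₁ n₂ n₃ (loT (v, i)) f c)
    (h' : Represents n₁ n₂ n₃ (upT (v, i)) f' c') :
    ln i ^ ((![n₂ + n₃ - 2, n₁ + n₃ - 2, n₁ + n₂ - 2] : Fin 3 → ℕ) i + 1) ∣ sh v (f - f') ↔
    ∀ w ∈ activeSet n₁ n₂ n₃ (loT (v, i)) ∩ activeSet n₁ n₂ n₃ (upT (v, i)), c w = c' w := by
  have key : ∃ j k : Fin 3, i ≠ j ∧ i ≠ k ∧ j ≠ k ∧
      (![n₂ + n₃ - 2, n₁ + n₃ - 2, n₁ + n₂ - 2] : Fin 3 → ℕ) i + 1 =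
        (![n₁, n₂, n₃] : Fin 3 → ℕ) j + (![n₁, n₂, n₃] : Fin 3 → ℕ) k - 1 := by
    fin_cases i
    · refine ⟨1, 2, by decide, by decide, by decide, ?_⟩
      show n₂ + n₃ - 2 + 1 = n₂ + n₃ - 1
      omega
    · refine ⟨0, 2, by decide, by decide, by decide, ?_⟩
      show n₁ + n₃ - 2 + 1 = n₁ + n₃ - 1
      omega
    · refine ⟨0, 1, by decide, by decide, by decide, ?_⟩
      show n₁ + n₂ - 2 + 1 = n₁ + n₂ - 1
      omega
  obtain ⟨j, k, hij, hik, hjk, e⟩ := key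
  rw [e]
  exact core h₁ h₂ h₃ hij hik hjk h h'

lemma main_lo_up (h₁ : 1 ≤ n₁) (h₂ : 1 ≤ n₂) (h₃ : 1 ≤ n₃) {ε : Edge} {f f' : BPoly}
    {c c' : (ℤ × ℤ) →₀ ℝ} (h : Represents n₁ n₂ n₃ (loT ε) f c)
    (h' : Represents n₁ n₂ n₃ (upT ε) f' c') (V : Set BPoly) (hf : f ∈ V) (hf' : f' ∈ V) :
    (∃ g ∈ SplineSpace {loT ε, upT ε} V ![n₂ + n₃ - 2, n₁ + n₃ - 2, n₁ + n₂ - 2],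
      EqOn g (evalP f) (loT ε).toSet ∧ EqOn g (evalP f') (upT ε).toSet) ↔
    ∀ w ∈ activeSet n₁ n₂ n₃ (loT ε) ∩ activeSet n₁ n₂ n₃ (upT ε), c w = c' w := by
  obtain ⟨v, i⟩ := ε
  have hlo : ((v, i) : Edge) ∈ (loT (v, i)).edges := (edges_iff _ _).mpr (Or.inl rfl)
  have hup : ((v, i) : Edge) ∈ (upT (v, i)).edges := (edges_iff _ _).mpr (Or.inr rfl)
  rw [← edgecase h₁ h₂ h₃ h h']
  constructor
  · rintro ⟨g, hg, hg1, hg2⟩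
    have := hg.2 (v, i) ⟨loT (v, i), by simp, hlo⟩
    rw [diamond_pair _ _ _ hlo hup] at this
    exact smooth_dvd this hg1 hg2
  · intro hd
    obtain ⟨g, hg, hg1, hg2⟩ := dvd_glue hd
    have hg1' : EqOn g (evalP f) (loT (v, i)).toSet := hg1.mono subset_closure
    have hg2' : EqOn g (evalP f') (upT (v, i)).toSet := hg2.mono subset_closure
    refine ⟨g, ⟨⟨hg.continuous.continuousOn, ?_⟩, ?_⟩, hg1', hg2'⟩
    · intro T hT
      rcases Finset.mem_insert.mp hT with rfl | hT
      · exact ⟨f, hf, hg1'⟩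
      · rw [Finset.mem_singleton] at hT
        subst hT
        exact ⟨f', hf', hg2'⟩
    · intro ε' _
      by_cases a : ε' ∈ (loT (v, i)).edges
      · by_cases b : ε' ∈ (upT (v, i)).edges
        · have := edge_unique a b
          subst this
          exact hg.contDiffOn
        · refine ContDiffOn.congr (contDiff_evalP f).contDiffOn ?_
          intro p hp
          simp [diamond, a, b, or_and_right, exists_or] at hp
          exact hg1 hp
      · refine ContDiffOn.congr (contDiff_evalP f').contDiffOn ?_
        intro p hp
        simp [diamond, a, or_and_right, exists_or] at hp
        exact hg2 hp.2

end asm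

theorem main_thm (n₁ n₂ n₃ : ℕ) (h₁ : 1 ≤ n₁) (h₂ : 1 ≤ n₂) (h₃ : 1 ≤ n₃)
    (T T' : Tri) (hTT' : T ≠ T') (ε : Edge) (hT : ε ∈ T.edges) (hT' : ε ∈ T'.edges)
    (f f' : BPoly) (c c' : (ℤ × ℤ) →₀ ℝ)
    (hc : Represents n₁ n₂ n₃ T f c) (hc' : Represents n₁ n₂ n₃ T' f' c') :
    (∃ g ∈ SplineSpace {T, T'} (VSpace n₁ n₂ n₃ T)
        ![n₂ + n₃ - 2, n₁ + n₃ - 2, n₁ + n₂ - 2],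
      EqOn g (evalP f) T.toSet ∧ EqOn g (evalP f') T'.toSet) ↔
    ∀ w ∈ activeSet n₁ n₂ n₃ T ∩ activeSet n₁ n₂ n₃ T', c w = c' w := by
  have hV : f ∈ VSpace n₁ n₂ n₃ T := ⟨c, hc⟩
  have hV' : f' ∈ VSpace n₁ n₂ n₃ T := V_indep h₁ h₂ h₃ hc'
  rcases (edges_iff T ε).mp hT with rfl | rfl
  · rcases (edges_iff T' ε).mp hT' with rfl | rfl
    · exact absurd rfl hTT'
    · exact main_lo_up h₁ h₂ h₃ hc hc' _ hV hV'
  · rcases (edges_iff T' ε).mp hT' with rfl | rfl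
    · have := main_lo_up h₁ h₂ h₃ hc' hc _ hV' hV
      rw [Finset.pair_comm, Set.inter_comm]
      constructor
      · rintro ⟨g, hg, a, b⟩ w hw
        exact (this.mp ⟨g, hg, b, a⟩ w hw).symm
      · intro hw
        obtain ⟨g, hg, a, b⟩ := this.mpr (fun w hw' => (hw w hw').symm)
        exact ⟨g, hg, b, a⟩
    · exact absurd rfl hTT'

/-- edge-contact characterization.  Let `△, △'` be triangles
of `G` whose closures intersect in an edge (of some type), `M = △̂ ∪ △̂'`, and
let `f, f' ∈ V_n` with coefficient vectors `c, c'`.  The piecewise function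
equal to `f` on `△` and to `f'` on `△'` belongs to `S^{d(n)}(M, V_n)` iff the
coefficients of `f` and `f'` agree on all common active translates. -/
theorem statement2 (n₁ n₂ n₃ : ℕ) (h₁ : 1 ≤ n₁) (h₂ : 1 ≤ n₂) (h₃ : 1 ≤ n₃)
    (T T' : Tri) (hTT' : T ≠ T') (ε : Edge) (hT : ε ∈ T.edges) (hT' : ε ∈ T'.edges)
    (f f' : BPoly) (c c' : (ℤ × ℤ) →₀ ℝ)
    (hc : Represents n₁ n₂ n₃ T f c) (hc' : Represents n₁ n₂ n₃ T' f' c') :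
    (∃ g ∈ SplineSpace {T, T'} (VSpace n₁ n₂ n₃ T)
        ![n₂ + n₃ - 2, n₁ + n₃ - 2, n₁ + n₂ - 2],
      EqOn g (evalP f) T.toSet ∧ EqOn g (evalP f') T'.toSet) ↔
    ∀ w ∈ activeSet n₁ n₂ n₃ T ∩ activeSet n₁ n₂ n₃ T', c w = c' w := by
  exact main_thm n₁ n₂ n₃ h₁ h₂ h₃ T T' hTT' ε hT hT' f f' c c' hc hc'

end
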